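/- For every integer n ≥ 13 the polynomial X^n − 2X^{n−1} − X + 1 has a root λ_n in the open interval (1/2, 1), and for any such root λ_n the Bernoulli convolution with parameter λ_n is absolutely continuous with respect to Lebesgue measure on ℝ. -/

import Mathlib

open MeasureTheory Real

/-- The Bernoulli convolution with parameter `λ`: the law of `∑ₙ Xₙ λⁿ` with `Xₙ` i.i.d.
uniform on `{±1}`, realized by extracting the (i.i.d. fair) binary digits of a
uniform point of `[0,1)`. -/
noncomputable def bernoulliConv (lam : ℝ) : Measure ℝ :=
  Measure.map
    (fun x => ∑' n : ℕ, (if ⌊x * 2 ^ (n + 1)⌋ % 2 = 1 then (1 : ℝ) else -1) * lam ^ n)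
    (volume.restrict (Set.Ico (0 : ℝ) 1))

/-!
The equation `x ^ (m + 1) - 2 * x ^ m - x + 1 = 0` reads `x ^ m * (x - 2) = x - 1`. It has exactly
one complex root `β` outside the open unit disc, and `β` exceeds `2` only slightly. Hence every
root `x` in `(1 / 2, 1)` is an algebraic integer all of whose conjugates, except `β`, lie in the
open unit disc, and Garsia's argument with the norm separates distinct sums `∑ k < L, ± x ^ k` by
`c / β ^ L`. Having `2 ^ L` atoms separated by almost `2 ^ (-L)`, the law of such a sum is nearly
uniform at scale `β ^ (-L)`: the entropy of its Gaussian mollifications drops by only a small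
multiple of `L` over a range of scales of logarithmic length comparable to `L`. By pigeonhole there
are scales in this range around which the entropy is almost constant, and a Pinsker type inequality
shows that at such a scale `s` convolving with this law improves the trivial bound `t / s` for the
difference `G_s - G_{s + t}` of the heat semigroup by a factor `1 / 6`.

By self-similarity the Bernoulli convolution `μ` contains, for every `k`, rescaled copies of `k`
such laws as independent summands, each with a scale of almost constant entropy at `s`, so it damps
`k`-fold differences by `(1 / 6) ^ k`. A comparison argument for the identity `1 = G_t + (1 - G_t)`
turns this into a bound for first differences, at the price of a factor `exp 1 ^ k`. As
`exp 1 / 3 < 1`, choosing `k` of the order of `log (log (1 / s))` makes the total variation of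
`μ ∗ G_s - μ ∗ G_{2 s}` summable over dyadic `s`. Thus `μ` is a limit in total variation of
absolutely continuous measures.
-/

section Separation

/-! ### The expanding conjugate and Garsia separation -/

/-- Garsia's separation property: distinct sums `∑_{k<L} ± x ^ k` differ by at least
`2 * c / β ^ L`. The sequence `e` is half the difference of two sign sequences. -/
def IsSeparated (x β c : ℝ) : Prop :=
  ∀ (L : ℕ) (e : ℕ → ℤ), (∀ k, |e k| ≤ 1) → (∃ k < L, e k ≠ 0) →
    c / β ^ L ≤ |∑ k ∈ Finset.range L, (e k : ℝ) * x ^ k|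

lemma geom_sum_lt_pow {β : ℝ} (hβ : 2 < β) (L : ℕ) : ∑ k ∈ Finset.range L, β ^ k < β ^ L := by
  induction L with
  | zero => simp
  | succ L ih =>
    rw [Finset.sum_range_succ, pow_succ]
    have : 0 < β ^ L := by positivity
    nlinarith

lemma norm_intCast_sum_le {e : ℕ → ℤ} (he : ∀ k, |e k| ≤ 1) (x : ℂ) (L : ℕ) :
    ‖∑ k ∈ Finset.range L, (e k : ℂ) * x ^ k‖ ≤ ∑ k ∈ Finset.range L, ‖x‖ ^ k := by
  refine norm_sum_le_of_le _ fun k _ ↦ ?_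
  rw [norm_mul, norm_pow, Complex.norm_intCast]
  exact mul_le_of_le_one_left (by positivity) (mod_cast he k)

lemma intCast_sum_ne_zero {x : ℂ} (hx : 2 < ‖x‖) {e : ℕ → ℤ} (he : ∀ k, |e k| ≤ 1) {L : ℕ}
    (h : ∃ k < L, e k ≠ 0) : ∑ k ∈ Finset.range L, (e k : ℂ) * x ^ k ≠ 0 := by
  induction L with
  | zero => simp at h
  | succ L ih =>
    rw [Finset.sum_range_succ]
    by_cases h_top : e L = 0
    · obtain ⟨k, hk, hk0⟩ := h
      have hkL : k ≠ L := by rintro rfl; exact hk0 h_top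
      simpa [h_top] using ih ⟨k, by lia, hk0⟩
    · intro h_sum
      have h_eq : ‖∑ k ∈ Finset.range L, (e k : ℂ) * x ^ k‖ = |(e L : ℝ)| * ‖x‖ ^ L := by
        rw [eq_neg_of_add_eq_zero_left h_sum, norm_neg, norm_mul, norm_pow, Complex.norm_intCast]
      have h_lead : (1 : ℝ) ≤ |(e L : ℝ)| := by exact_mod_cast Int.one_le_abs h_top
      have h_low := (norm_intCast_sum_le he x L).trans_lt (geom_sum_lt_pow hx L)
      have : 0 < ‖x‖ ^ L := by positivity
      nlinarith

section NumberField

variable {K : Type*} [Field K] [Algebra ℚ K] [FiniteDimensional ℚ K]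

lemma one_le_prod_norm_embeddings {y : K} (hy : y ≠ 0) (hi : IsIntegral ℤ y) :
    1 ≤ ∏ σ : K →ₐ[ℚ] ℂ, ‖σ y‖ := by
  rw [← norm_prod, ← Algebra.norm_eq_prod_embeddings ℚ ℂ y]
  obtain ⟨c, hc⟩ := IsIntegrallyClosed.isIntegral_iff.mp (Algebra.isIntegral_norm ℚ hi)
  have h_norm : Algebra.norm ℚ y ≠ 0 := Algebra.norm_ne_zero_iff.mpr hy
  rw [← hc] at h_norm ⊢
  have hc0 : c ≠ 0 := by rintro rfl; simp at h_norm
  simp only [eq_intCast, map_intCast, Complex.norm_intCast]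
  exact_mod_cast Int.one_le_abs hc0

lemma exists_one_le_norm_embedding {y : K} (hy : y ≠ 0) (hi : IsIntegral ℤ y) :
    ∃ τ : K →ₐ[ℚ] ℂ, 1 ≤ ‖τ y‖ := by
  by_contra! h_lt
  have : Nonempty (K →ₐ[ℚ] ℂ) := ⟨IsAlgClosed.lift⟩
  have h_prod : ∏ σ : K →ₐ[ℚ] ℂ, ‖σ y‖ < ∏ _σ : K →ₐ[ℚ] ℂ, (1 : ℝ) :=
    Finset.prod_lt_prod_of_nonempty (fun σ _ ↦ norm_pos_iff.mpr ((map_ne_zero σ).mpr hy))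
      (fun σ _ ↦ h_lt σ) Finset.univ_nonempty
  rw [Finset.prod_const_one] at h_prod
  exact (one_le_prod_norm_embeddings hy hi).not_gt h_prod

/-- If `τ` is the only embedding expanding the algebraic integer `g`, then in the product formula
for a signed polynomial in `g` every factor but those of `σ₀` and `τ` is bounded. -/
theorem exists_pos_le_norm_intCast_sum {g : K} (hg : IsIntegral ℤ g) {σ₀ τ : K →ₐ[ℚ] ℂ}
    (hτ : 2 < ‖τ g‖) (hσ : ∀ σ : K →ₐ[ℚ] ℂ, σ ≠ τ → ‖σ g‖ < 1) (hne : σ₀ ≠ τ) :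
    ∃ c : ℝ, 0 < c ∧ ∀ (L : ℕ) (e : ℕ → ℤ), (∀ k, |e k| ≤ 1) → (∃ k < L, e k ≠ 0) →
      c / ‖τ g‖ ^ L ≤ ‖∑ k ∈ Finset.range L, (e k : ℂ) * σ₀ g ^ k‖ := by
  classical
  let S : Finset (K →ₐ[ℚ] ℂ) := (Finset.univ.erase τ).erase σ₀
  have hS : ∀ σ ∈ S, ‖σ g‖ < 1 := fun σ hσS ↦
    hσ σ (Finset.ne_of_mem_erase (Finset.mem_of_mem_erase hσS))
  let M : ℝ := ∏ σ ∈ S, (1 - ‖σ g‖)⁻¹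
  have hM : 0 < M := Finset.prod_pos fun σ hσS ↦ inv_pos.mpr (sub_pos.mpr (hS σ hσS))
  refine ⟨M⁻¹, inv_pos.mpr hM, fun L e he h_nonzero ↦ ?_⟩
  let y : K := ∑ k ∈ Finset.range L, (e k : K) * g ^ k
  have h_apply : ∀ σ : K →ₐ[ℚ] ℂ, σ y = ∑ k ∈ Finset.range L, (e k : ℂ) * σ g ^ k := by
    intro σ; simp [y]
  have hy : y ≠ 0 := fun h ↦
    intCast_sum_ne_zero hτ he h_nonzero (by rw [← h_apply, h, map_zero])
  have hy_int : IsIntegral ℤ y :=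
    IsIntegral.sum _ fun k _ ↦ (isIntegral_algebraMap (R := ℤ) (x := e k)).mul (hg.pow k)
  have h_prod := one_le_prod_norm_embeddings hy hy_int
  rw [← Finset.mul_prod_erase _ _ (Finset.mem_univ τ),
    ← Finset.mul_prod_erase _ _ (Finset.mem_erase.mpr ⟨hne, Finset.mem_univ σ₀⟩)] at h_prod
  have h_expanding : ‖τ y‖ ≤ ‖τ g‖ ^ L := by
    rw [h_apply]
    exact (norm_intCast_sum_le he _ L).trans (geom_sum_lt_pow hτ L).le
  have h_rest : ∏ σ ∈ S, ‖σ y‖ ≤ M := by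
    refine Finset.prod_le_prod (fun σ _ ↦ norm_nonneg _) fun σ hσS ↦ ?_
    rw [h_apply, ← tsum_geometric_of_lt_one (norm_nonneg _) (hS σ hσS)]
    exact (norm_intCast_sum_le he _ L).trans <|
      (summable_geometric_of_lt_one (norm_nonneg _) (hS σ hσS)).sum_le_tsum _
        fun k _ ↦ by positivity
  have h_bound : 1 ≤ ‖τ g‖ ^ L * (‖σ₀ y‖ * M) := h_prod.trans (by gcongr)
  rw [← h_apply, div_le_iff₀ (by positivity), inv_le_iff_one_le_mul₀ hM]
  linarith

end NumberField

section Roots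

variable {m : ℕ}

lemma exists_expanding_root (hm : 12 ≤ m) :
    ∃ β : ℝ, 2 < β ∧ β ≤ 2.001 ∧ β ^ m * (β - 2) = β - 1 := by
  have h_cont : ContinuousOn (fun x : ℝ ↦ x ^ m * (x - 2) - (x - 1)) (Set.Icc 2 2.001) := by
    fun_prop
  have h_pow : (2 : ℝ) ^ 12 ≤ 2.001 ^ m :=
    (pow_le_pow_right₀ (by norm_num) hm).trans (by gcongr; norm_num)
  obtain ⟨β, hβ, hβ0⟩ := intermediate_value_Icc (by norm_num) h_cont
    (show (0 : ℝ) ∈ Set.Icc _ _ from ⟨by norm_num, by nlinarith⟩)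
  refine ⟨β, hβ.1.lt_of_ne ?_, hβ.2, by simpa [sub_eq_zero] using hβ0⟩
  rintro rfl
  norm_num at hβ0

lemma exists_root_Ioo (hm : 12 ≤ m) :
    ∃ x ∈ Set.Ioo (1 / 2 : ℝ) 1, x ^ (m + 1) - 2 * x ^ m - x + 1 = 0 := by
  have h_cont : ContinuousOn (fun x : ℝ ↦ x ^ (m + 1) - 2 * x ^ m - x + 1)
      (Set.Icc (1 / 2) 1) := by fun_prop
  refine intermediate_value_Ioo' (by norm_num) h_cont
    (show (0 : ℝ) ∈ Set.Ioo _ _ from ⟨by norm_num, ?_⟩)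
  have h_pow : (1 / 2 : ℝ) ^ m ≤ (1 / 2) ^ 12 :=
    pow_le_pow_of_le_one (by norm_num) (by norm_num) hm
  have : (0 : ℝ) < (1 / 2) ^ m := by positivity
  rw [pow_succ]
  nlinarith

lemma half_le_pow_four_of_root (hm : 12 ≤ m) {x : ℝ} (hx : x ∈ Set.Ioo (1 / 2 : ℝ) 1)
    (h : x ^ m * (x - 2) = x - 1) : 1 / 2 ≤ x ^ 4 := by
  have hx0 : 0 < x := by linarith [hx.1]
  have h_pow : x ^ m ≤ x ^ 12 := pow_le_pow_of_le_one hx0.le hx.2.le hm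
  by_contra! h_lt
  have h_twelve : x ^ 12 ≤ 1 / 8 := by
    calc x ^ 12 = (x ^ 4) ^ 3 := by ring
      _ ≤ (1 / 2) ^ 3 := by gcongr
      _ = 1 / 8 := by norm_num
  have h_upper : x < 0.841 := by
    by_contra! h_ge
    have : (0.841 : ℝ) ^ 4 ≤ x ^ 4 := by gcongr
    norm_num at this
    linarith
  nlinarith [hx.2]

lemma three_halves_le_re_of_root {z : ℂ} (hz : z ^ m * (z - 2) = z - 1) (hz1 : 1 ≤ ‖z‖) :
    3 / 2 ≤ z.re := by
  by_contra! h_re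
  have h_closer : ‖z - 1‖ < ‖z - 2‖ := by
    rw [← sq_lt_sq₀ (norm_nonneg _) (norm_nonneg _), ← Complex.normSq_eq_norm_sq,
      ← Complex.normSq_eq_norm_sq, Complex.normSq_apply, Complex.normSq_apply]
    simp only [Complex.sub_re, Complex.sub_im, Complex.one_re, Complex.one_im, Complex.re_ofNat,
      Complex.im_ofNat]
    nlinarith
  have h_norm : ‖z‖ ^ m * ‖z - 2‖ = ‖z - 1‖ := by rw [← hz, norm_mul, norm_pow]
  nlinarith [one_le_pow₀ hz1 (n := m), norm_nonneg (z - 2)]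

lemma succ_mul_two_thirds_pow_le (hm : 12 ≤ m) : ((m : ℝ) + 1) * (2 / 3) ^ m ≤ 1 / 2 := by
  induction m, hm using Nat.le_induction with
  | base => norm_num
  | succ m hm ih =>
    have : (0 : ℝ) < (2 / 3) ^ m := by positivity
    have hm' : (12 : ℝ) ≤ m := by exact_mod_cast hm
    rw [pow_succ]
    push_cast
    nlinarith

/-- On the half-plane `3 / 2 ≤ re z` the map `z ↦ 2 + (z - 1) / z ^ m`, whose fixed points are the
roots there, is a contraction. -/
lemma norm_deriv_sub_one_mul_inv_pow_le (hm : 12 ≤ m) {z : ℂ} (hz : 3 / 2 ≤ z.re) :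
    ‖z⁻¹ ^ m + (z - 1) * (m * z⁻¹ ^ (m - 1) * -(z ^ 2)⁻¹)‖ ≤ 1 / 2 := by
  have hz_norm : 3 / 2 ≤ ‖z‖ := hz.trans (Complex.re_le_norm z)
  have hz0 : z ≠ 0 := by rintro rfl; norm_num at hz
  have h_eq : z⁻¹ ^ m + (z - 1) * (m * z⁻¹ ^ (m - 1) * -(z ^ 2)⁻¹)
      = z⁻¹ ^ m * (1 - m * ((z - 1) / z)) := by
    obtain ⟨j, rfl⟩ : ∃ j, m = j + 1 := ⟨m - 1, by lia⟩
    rw [Nat.add_sub_cancel, pow_succ]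
    field_simp
    ring
  have h_ratio : ‖(z - 1) / z‖ ≤ 1 := by
    rw [norm_div, div_le_one (norm_pos_iff.mpr hz0), ← sq_le_sq₀ (norm_nonneg _) (norm_nonneg _),
      ← Complex.normSq_eq_norm_sq, ← Complex.normSq_eq_norm_sq, Complex.normSq_apply,
      Complex.normSq_apply]
    simp only [Complex.sub_re, Complex.sub_im, Complex.one_re, Complex.one_im]
    nlinarith
  have h_inv : ‖z⁻¹‖ ≤ 2 / 3 := by
    rw [norm_inv, show (2 / 3 : ℝ) = (3 / 2)⁻¹ by norm_num]
    exact inv_anti₀ (by norm_num) hz_norm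
  have h_factor : ‖1 - (m : ℂ) * ((z - 1) / z)‖ ≤ 1 + m := by
    refine (norm_sub_le _ _).trans ?_
    rw [norm_one, norm_mul, Complex.norm_natCast]
    gcongr
    exact mul_le_of_le_one_right (by positivity) h_ratio
  calc _ = ‖z⁻¹‖ ^ m * ‖1 - (m : ℂ) * ((z - 1) / z)‖ := by rw [h_eq, norm_mul, norm_pow]
    _ ≤ (2 / 3) ^ m * (1 + m) := by gcongr
    _ ≤ 1 / 2 := by linarith [succ_mul_two_thirds_pow_le hm]

lemma root_unique_of_one_le_norm (hm : 12 ≤ m) {z w : ℂ} (hz : z ^ m * (z - 2) = z - 1)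
    (hz1 : 1 ≤ ‖z‖) (hw : w ^ m * (w - 2) = w - 1) (hw1 : 1 ≤ ‖w‖) : z = w := by
  have h_ne : ∀ x : ℂ, 3 / 2 ≤ x.re → x ≠ 0 := by rintro x hx rfl; norm_num at hx
  have h_lipschitz : ‖(z - 1) * z⁻¹ ^ m - (w - 1) * w⁻¹ ^ m‖ ≤ 1 / 2 * ‖z - w‖ :=
    (convex_halfSpace_re_ge (3 / 2)).norm_image_sub_le_of_norm_hasDerivWithin_le
      (f := fun x : ℂ ↦ (x - 1) * x⁻¹ ^ m)
      (f' := fun x ↦ x⁻¹ ^ m + (x - 1) * (m * x⁻¹ ^ (m - 1) * -(x ^ 2)⁻¹))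
      (fun x hx ↦ by
        simpa only [one_mul, id] using (((hasDerivAt_id x).sub_const 1).fun_mul
          ((hasDerivAt_inv (h_ne x hx)).fun_pow m)).hasDerivWithinAt)
      (fun x hx ↦ norm_deriv_sub_one_mul_inv_pow_le hm hx)
      (three_halves_le_re_of_root hw hw1) (three_halves_le_re_of_root hz hz1)
  have h_fixed : ∀ x : ℂ, x ^ m * (x - 2) = x - 1 → 1 ≤ ‖x‖ → (x - 1) * x⁻¹ ^ m = x - 2 := by
    intro x hx hx1
    have hx0 := h_ne x (three_halves_le_re_of_root hx hx1)
    rw [← hx, inv_pow]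
    field_simp
  rw [h_fixed z hz hz1, h_fixed w hw hw1, sub_sub_sub_cancel_right] at h_lipschitz
  rw [← sub_eq_zero, ← norm_eq_zero]
  linarith [norm_nonneg (z - w)]

lemma isIntegral_of_root (hm : 1 ≤ m) {x : ℝ} (h : x ^ m * (x - 2) = x - 1) : IsIntegral ℤ x := by
  refine ⟨.X ^ (m + 1) - (.C 2 * .X ^ m + .X - 1), Polynomial.monic_X_pow_sub ?_, ?_⟩
  · refine lt_of_le_of_lt (b := (m : WithBot ℕ)) ?_ (by exact_mod_cast Nat.lt_succ_self m)
    compute_degree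
    exact max_le le_rfl (by exact_mod_cast hm)
  · simp only [map_ofNat, Polynomial.eval₂_sub, Polynomial.eval₂_add, Polynomial.eval₂_mul,
      Polynomial.eval₂_pow, Polynomial.eval₂_X, Polynomial.eval₂_one, Polynomial.eval₂_ofNat]
    linear_combination h

theorem exists_isSeparated_of_root (hm : 12 ≤ m) {β : ℝ} (hβ : 2 < β)
    (hβm : β ^ m * (β - 2) = β - 1) {x : ℝ} (hx0 : 0 < x) (hx1 : x < 1)
    (hxm : x ^ m * (x - 2) = x - 1) : ∃ c, 0 < c ∧ IsSeparated x β c := by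
  have h_int : IsIntegral ℤ x := isIntegral_of_root (by lia) hxm
  let K := IntermediateField.adjoin ℚ {x}
  have : FiniteDimensional ℚ K := IntermediateField.adjoin.finiteDimensional h_int.tower_top
  let g : K := IntermediateField.AdjoinSimple.gen ℚ x
  let σ₀ : K →ₐ[ℚ] ℂ := (Complex.ofRealAm.restrictScalars ℚ).comp K.val
  have hσ₀ : σ₀ g = (x : ℂ) := rfl
  have hg0 : g ≠ 0 := fun h ↦ hx0.ne' (congrArg Subtype.val h)
  have hg_int : IsIntegral ℤ g :=
    (isIntegral_algebraMap_iff (A := K) (B := ℝ) (algebraMap K ℝ).injective).mp h_int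
  have hg_root : g ^ m * (g - 2) = g - 1 := Subtype.ext hxm
  have h_conj : ∀ σ : K →ₐ[ℚ] ℂ, σ g ^ m * (σ g - 2) = σ g - 1 := fun σ ↦ by
    simpa only [map_mul, map_pow, map_sub, map_ofNat, map_one] using congrArg σ hg_root
  have hβ_norm : ‖(β : ℂ)‖ = β := by
    rw [Complex.norm_real, Real.norm_eq_abs, abs_of_pos (by linarith)]
  have h_expanding : ∀ σ : K →ₐ[ℚ] ℂ, 1 ≤ ‖σ g‖ → σ g = β := fun σ hσ ↦
    root_unique_of_one_le_norm hm (h_conj σ) hσ (mod_cast hβm) (by rw [hβ_norm]; linarith)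
  obtain ⟨τ, hτ⟩ := exists_one_le_norm_embedding hg0 hg_int
  have hτβ : ‖τ g‖ = β := by rw [h_expanding τ hτ, hβ_norm]
  have h_contracting : ∀ σ : K →ₐ[ℚ] ℂ, σ ≠ τ → ‖σ g‖ < 1 := by
    intro σ hσ
    by_contra! h_ge
    refine hσ (IntermediateField.algHom_ext_of_eq_adjoin ℚ (S := K) (s := {x}) rfl ?_)
    rintro _ rfl
    exact (h_expanding σ h_ge).trans (h_expanding τ hτ).symm
  have h_ne : σ₀ ≠ τ := by
    rintro rfl
    rw [hσ₀, Complex.norm_real, Real.norm_eq_abs, abs_of_pos hx0] at hτβ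
    linarith
  obtain ⟨c, hc, h_sep⟩ :=
    exists_pos_le_norm_intCast_sum hg_int (hτβ.symm ▸ hβ) h_contracting h_ne
  refine ⟨c, hc, fun L e he h_nonzero ↦ ?_⟩
  have := h_sep L e he h_nonzero
  rw [hσ₀, hτβ] at this
  rw [← Real.norm_eq_abs, ← Complex.norm_real]
  push_cast
  exact this

end Roots

end Separation

section Comparison

/-! ### A comparison principle for a discrete transport inequality -/

/-- `B` dominates `D` on the grid once it does on the edges `i = n` and `m = R`: the recursion
expresses `D i m` through its neighbours in the two directions of these edges. -/
lemma le_of_le_on_edges {D B : ℕ → ℕ → ℝ} {n R : ℕ}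
    (hD : ∀ i m, D i m ≤ D (i + 1) m + D i (m + 1))
    (hB : ∀ i < n, ∀ m < R, B (i + 1) m + B i (m + 1) ≤ B i m)
    (h_last : ∀ m ≤ R, D n m ≤ B n m) (h_end : ∀ i ≤ n, D i R ≤ B i R) {i : ℕ} (hi : i ≤ n) :
    ∀ m ≤ R, D i m ≤ B i m := by
  induction hi using Nat.decreasingInduction with
  | self => exact h_last
  | of_succ i hi ih =>
    intro m hm
    induction hm using Nat.decreasingInduction with
    | self => exact h_end i (by lia)
    | of_succ m hm ihm => linarith [hD i m, hB i hi m hm, ih m hm.le]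

lemma factorial_div_ascPochhammer_sub {x : ℝ} (hx : 0 < x) (i : ℕ) :
    i.factorial / (ascPochhammer ℝ (i + 1)).eval x
        - i.factorial / (ascPochhammer ℝ (i + 1)).eval (x + 1)
      = (i + 1).factorial / (ascPochhammer ℝ (i + 2)).eval x := by
  have h_left : ∀ j, (ascPochhammer ℝ (j + 1)).eval x = x * (ascPochhammer ℝ j).eval (x + 1) := by
    intro j
    simp [ascPochhammer_succ_left]
  have h_pos := ascPochhammer_pos i (x + 1) (by linarith)
  rw [h_left, h_left, ascPochhammer_succ_eval, Nat.factorial_succ]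
  push_cast
  field_simp
  ring

lemma ascPochhammer_eval_le_pow {x : ℝ} (hx : 0 < x) {k i : ℕ} (hi : i ≤ k) :
    (ascPochhammer ℝ i).eval x ≤ (x + k) ^ i := by
  induction i with
  | zero => simp
  | succ i ih =>
    rw [ascPochhammer_succ_eval, pow_succ]
    have hik : (i : ℝ) ≤ k := by exact_mod_cast (by lia : i ≤ k)
    have := ascPochhammer_pos i x hx
    gcongr
    exact ih (by lia)

/-- The barrier `B i m` for a quantity attached to the power `i + 1`, with `k = n + 1`. The first
summand solves the recursion with equality and dominates `(ε * k / (m + 4 * k)) ^ k` at `i = n`;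
the second one is a supersolution dominating `(k / R) ^ (i + 1)` at `m = R`. -/
noncomputable def transportBarrier (n R : ℕ) (ε : ℝ) (i m : ℕ) : ℝ :=
  (ε * (n + 1)) ^ (n + 1) / n.factorial *
      (i.factorial / (ascPochhammer ℝ (i + 1)).eval (m + 3 * (n + 1) : ℝ))
    + (n + 1 : ℝ) ^ (n + 1) / (R : ℝ) ^ (i + 1) * (1 + (n - i) * ((R - m) / R))

variable {n R : ℕ} {ε : ℝ}

lemma transportBarrier_supersolution (hR : 1 ≤ R) {i m : ℕ} (hi : i < n) :
    transportBarrier n R ε (i + 1) m + transportBarrier n R ε i (m + 1)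
      ≤ transportBarrier n R ε i m := by
  have hR0 : (0 : ℝ) < R := by exact_mod_cast hR
  have h_tele := factorial_div_ascPochhammer_sub (x := (m + 3 * (n + 1) : ℝ)) (by positivity) i
  have h_slope : (1 : ℝ) + (n - (i + 1)) * ((R - m) / R) ≤ n - i := by
    have h_le : ((R : ℝ) - m) / R ≤ 1 := by rw [div_le_one hR0]; linarith [m.cast_nonneg (α := ℝ)]
    have hin : (i : ℝ) + 1 ≤ n := by exact_mod_cast hi
    nlinarith
  have h_second : (n + 1 : ℝ) ^ (n + 1) / (R : ℝ) ^ (i + 2) * (1 + (n - (i + 1)) * ((R - m) / R))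
      + (n + 1 : ℝ) ^ (n + 1) / (R : ℝ) ^ (i + 1) * (1 + (n - i) * ((R - (m + 1)) / R))
      ≤ (n + 1 : ℝ) ^ (n + 1) / (R : ℝ) ^ (i + 1) * (1 + (n - i) * ((R - m) / R)) := by
    calc _ ≤ (n + 1 : ℝ) ^ (n + 1) / (R : ℝ) ^ (i + 2) * (n - i)
          + (n + 1 : ℝ) ^ (n + 1) / (R : ℝ) ^ (i + 1) * (1 + (n - i) * ((R - (m + 1)) / R)) := by
          gcongr
      _ = _ := by field_simp; ring
  unfold transportBarrier
  push_cast
  rw [show (m : ℝ) + 1 + 3 * (n + 1) = m + 3 * (n + 1) + 1 by ring, ← h_tele]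
  linarith

lemma pow_le_transportBarrier_last (hε : 0 ≤ ε) (m : ℕ) :
    (ε * (n + 1) / (m + 4 * (n + 1))) ^ (n + 1) ≤ transportBarrier n R ε n m := by
  have hx : (0 : ℝ) < m + 3 * (n + 1) := by positivity
  have h_pos := ascPochhammer_pos (n + 1) _ hx
  have h_le := ascPochhammer_eval_le_pow hx (le_refl (n + 1))
  calc (ε * (n + 1) / (m + 4 * (n + 1))) ^ (n + 1)
      = (ε * (n + 1)) ^ (n + 1) / (m + 3 * (n + 1) + (n + 1 : ℕ) : ℝ) ^ (n + 1) := by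
        rw [div_pow]; push_cast; ring
    _ ≤ (ε * (n + 1)) ^ (n + 1) / (ascPochhammer ℝ (n + 1)).eval (m + 3 * (n + 1) : ℝ) := by gcongr
    _ = (ε * (n + 1)) ^ (n + 1) / n.factorial *
        (n.factorial / (ascPochhammer ℝ (n + 1)).eval (m + 3 * (n + 1) : ℝ)) := by
        field_simp
    _ ≤ transportBarrier n R ε n m := by
        rw [transportBarrier, sub_self, zero_mul]
        exact le_add_of_nonneg_right (by positivity)

lemma pow_le_transportBarrier_end (hε : 0 ≤ ε) {i : ℕ} (hi : i ≤ n) :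
    ((n + 1 : ℝ) / R) ^ (i + 1) ≤ transportBarrier n R ε i R := by
  have h_pos := ascPochhammer_pos (i + 1) (R + 3 * (n + 1) : ℝ) (by positivity)
  rw [transportBarrier, sub_self, zero_div, mul_zero, add_zero, mul_one, div_pow]
  have h_pow : (n + 1 : ℝ) ^ (i + 1) ≤ (n + 1 : ℝ) ^ (n + 1) :=
    pow_le_pow_right₀ (by linarith [n.cast_nonneg (α := ℝ)]) (by lia)
  refine le_add_of_nonneg_of_le (by positivity) (by gcongr)

lemma transportBarrier_zero_zero_le (hε : 0 ≤ ε) (hR : 1 ≤ R) :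
    transportBarrier n R ε 0 0 ≤ (exp 1 * ε) ^ (n + 1) / 3 + (n + 1 : ℝ) ^ (n + 2) / R := by
  have hR0 : (R : ℝ) ≠ 0 := by exact_mod_cast (by lia : R ≠ 0)
  have h_exp : (n + 1 : ℝ) ^ (n + 1) / (n + 1).factorial ≤ exp 1 ^ (n + 1) := by
    rw [← Real.exp_nat_mul, mul_one]
    exact_mod_cast Real.pow_div_factorial_le_exp ((n + 1 : ℕ) : ℝ) (by positivity) (n + 1)
  have h_eq : transportBarrier n R ε 0 0 =
      (n + 1 : ℝ) ^ (n + 1) / (n + 1).factorial * ε ^ (n + 1) / 3 + (n + 1 : ℝ) ^ (n + 2) / R := by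
    rw [transportBarrier, Nat.factorial_succ, mul_pow]
    simp only [ascPochhammer_one, Polynomial.eval_X, Nat.factorial_zero, zero_add]
    push_cast
    field_simp
    ring
  rw [h_eq, mul_pow]
  gcongr

theorem le_of_transport {D : ℕ → ℕ → ℝ} {k : ℕ} (hk : 1 ≤ k) (hR : 1 ≤ R) (hε : 0 ≤ ε)
    (hD : ∀ i m, D i m ≤ D (i + 1) m + D i (m + 1))
    (h_last : ∀ m ≤ R, D k m ≤ (ε * k / (m + 4 * k)) ^ k)
    (h_end : ∀ i, 1 ≤ i → i ≤ k → D i R ≤ ((k : ℝ) / R) ^ i) :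
    D 1 0 ≤ (exp 1 * ε) ^ k / 3 + (k : ℝ) ^ (k + 1) / R := by
  obtain ⟨n, rfl⟩ : ∃ n, k = n + 1 := ⟨k - 1, by lia⟩
  push_cast at h_last h_end ⊢
  refine (le_of_le_on_edges (D := fun i m ↦ D (i + 1) m) (B := transportBarrier n R ε)
    (fun i m ↦ hD (i + 1) m) (fun i hi m _ ↦ transportBarrier_supersolution hR hi)
    (fun m hm ↦ (h_last m hm).trans (pow_le_transportBarrier_last hε m))
    (fun i hi ↦ (h_end (i + 1) (by lia) (by lia)).trans (pow_le_transportBarrier_end hε hi))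
    n.zero_le 0 R.zero_le).trans (transportBarrier_zero_zero_le hε hR)

end Comparison

section WithDensity

/-! ### Gaussian mollification and entropy -/

variable {α : Type*} [MeasurableSpace α] {μ : Measure α} {f : α → ℝ}

lemma integral_withDensity_ofReal (hf : Measurable f) (hf0 : ∀ x, 0 ≤ f x) (φ : α → ℝ) :
    ∫ x, φ x ∂μ.withDensity (fun x ↦ ENNReal.ofReal (f x)) = ∫ x, f x * φ x ∂μ := by
  rw [integral_withDensity_eq_integral_toReal_smul hf.ennreal_ofReal
    (ae_of_all _ fun _ ↦ ENNReal.ofReal_lt_top)]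
  simp only [ENNReal.toReal_ofReal (hf0 _), smul_eq_mul]

lemma integrable_withDensity_ofReal_iff (hf : Measurable f) (hf0 : ∀ x, 0 ≤ f x) {φ : α → ℝ} :
    Integrable φ (μ.withDensity fun x ↦ ENNReal.ofReal (f x)) ↔
      Integrable (fun x ↦ f x * φ x) μ := by
  rw [integrable_withDensity_iff_integrable_smul' hf.ennreal_ofReal
    (ae_of_all _ fun _ ↦ ENNReal.ofReal_lt_top)]
  simp only [ENNReal.toReal_ofReal (hf0 _), smul_eq_mul]

end WithDensity

section Gaussian

/-- The centred Gaussian measure on `ℝ`, indexed by its variance `s` as a real number so that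
variances can be added and subtracted freely; it is the Dirac mass at `0` when `s ≤ 0`. -/
noncomputable def centeredGaussian (s : ℝ) : Measure ℝ :=
  ProbabilityTheory.gaussianReal 0 s.toNNReal

/-- The Lebesgue density of `centeredGaussian s`, for `0 < s`. -/
noncomputable def gaussDensity (s x : ℝ) : ℝ := (√(2 * π * s))⁻¹ * exp (-x ^ 2 / (2 * s))

variable {s t : ℝ}

instance : IsProbabilityMeasure (centeredGaussian s) := by
  unfold centeredGaussian; infer_instance

lemma centeredGaussian_conv (hs : 0 ≤ s) (ht : 0 ≤ t) :
    centeredGaussian s ∗ centeredGaussian t = centeredGaussian (s + t) := by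
  simp only [centeredGaussian, ProbabilityTheory.gaussianReal_conv_gaussianReal,
    Real.toNNReal_add hs ht, add_zero]

lemma gaussDensity_pos (hs : 0 < s) (x : ℝ) : 0 < gaussDensity s x := by
  unfold gaussDensity; positivity

lemma gaussDensity_eq_zero_mul_exp (s x : ℝ) :
    gaussDensity s x = gaussDensity s 0 * exp (-x ^ 2 / (2 * s)) := by
  simp [gaussDensity]

lemma gaussDensity_le_zero (hs : 0 < s) (x : ℝ) : gaussDensity s x ≤ gaussDensity s 0 := by
  rw [gaussDensity_eq_zero_mul_exp]
  refine mul_le_of_le_one_right (gaussDensity_pos hs 0).le (exp_le_one_iff.mpr ?_)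
  exact div_nonpos_of_nonpos_of_nonneg (neg_nonpos.mpr (sq_nonneg x)) (by positivity)

lemma abs_gaussDensity_le (hs : 0 < s) (x : ℝ) : |gaussDensity s x| ≤ gaussDensity s 0 := by
  rw [abs_of_pos (gaussDensity_pos hs x)]
  exact gaussDensity_le_zero hs x

@[fun_prop]
lemma continuous_gaussDensity (s : ℝ) : Continuous (gaussDensity s) := by
  unfold gaussDensity; fun_prop

lemma centeredGaussian_eq_withDensity (hs : 0 < s) :
    centeredGaussian s = volume.withDensity fun x ↦ ENNReal.ofReal (gaussDensity s x) := by
  have h_pdf (x : ℝ) : gaussDensity s x = ProbabilityTheory.gaussianPDFReal 0 s.toNNReal x := by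
    simp [gaussDensity, ProbabilityTheory.gaussianPDFReal, Real.coe_toNNReal _ hs.le]
  rw [centeredGaussian, ProbabilityTheory.gaussianReal_of_var_ne_zero _ (by simpa using hs),
    ProbabilityTheory.gaussianPDF_def]
  simp only [h_pdf]

lemma integral_centeredGaussian (hs : 0 < s) (φ : ℝ → ℝ) :
    ∫ x, φ x ∂centeredGaussian s = ∫ x, gaussDensity s x * φ x := by
  rw [centeredGaussian_eq_withDensity hs, integral_withDensity_ofReal
    (continuous_gaussDensity s).measurable fun x ↦ (gaussDensity_pos hs x).le]

lemma integrable_abs_add_sq_centeredGaussian (s B : ℝ) :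
    Integrable (fun u ↦ (|u| + B) ^ 2) (centeredGaussian s) := by
  have h_id : MemLp (id : ℝ → ℝ) 2 (centeredGaussian s) := by
    exact_mod_cast ProbabilityTheory.memLp_id_gaussianReal (μ := 0) (v := s.toNNReal) 2
  exact (h_id.abs.add (memLp_const B)).integrable_sq

end Gaussian

section Mollify

/-- The density `ρ * η_s` of a measure `ρ` convolved with the centred Gaussian of variance `s`. -/
noncomputable def mollify (ρ : Measure ℝ) (s z : ℝ) : ℝ := ∫ x, gaussDensity s (z - x) ∂ρ

/-- The negative `∫ f log f` of the differential entropy of `ρ` convolved with the centred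
Gaussian of variance `s`, where `f` is its density. -/
noncomputable def negEntropy (ρ : Measure ℝ) (s : ℝ) : ℝ :=
  ∫ z, log (mollify ρ s z) ∂(ρ ∗ centeredGaussian s)

variable {ρ : Measure ℝ} {s t B : ℝ}

lemma mollify_nonneg (hs : 0 < s) (z : ℝ) : 0 ≤ mollify ρ s z :=
  integral_nonneg fun _ ↦ (gaussDensity_pos hs _).le

lemma ae_abs_fst_add_snd_add_sq_le (hB : ∀ᵐ x ∂ρ, |x| ≤ B) (s : ℝ) :
    ∀ᵐ p ∂ρ.prod (centeredGaussian s), (|p.1 + p.2| + B) ^ 2 ≤ (|p.2| + 2 * B) ^ 2 := by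
  filter_upwards [Measure.quasiMeasurePreserving_fst.ae hB] with p hp
  have := abs_add_le p.1 p.2
  have := abs_nonneg p.1
  exact pow_le_pow_left₀ (by linarith [abs_nonneg (p.1 + p.2)]) (by linarith) 2

variable [IsProbabilityMeasure ρ]

lemma integrable_gaussDensity_sub (hs : 0 < s) (z : ℝ) :
    Integrable (fun x ↦ gaussDensity s (z - x)) ρ :=
  .of_bound (by fun_prop) (gaussDensity s 0) (ae_of_all _ fun _ ↦ abs_gaussDensity_le hs _)

lemma continuous_mollify (hs : 0 < s) : Continuous (mollify ρ s) :=
  continuous_of_dominated (fun _ ↦ by fun_prop)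
    (fun z ↦ ae_of_all _ fun x ↦ abs_gaussDensity_le hs (z - x)) (integrable_const _)
    (ae_of_all _ fun _ ↦ by fun_prop)

lemma mollify_le (hs : 0 < s) (z : ℝ) : mollify ρ s z ≤ gaussDensity s 0 := by
  simpa [mollify] using integral_mono (integrable_gaussDensity_sub hs z)
    (integrable_const (μ := ρ) (gaussDensity s 0)) fun x ↦ gaussDensity_le_zero hs (z - x)

lemma le_mollify (hs : 0 < s) (hB : ∀ᵐ x ∂ρ, |x| ≤ B) (z : ℝ) :
    gaussDensity s 0 * exp (-(|z| + B) ^ 2 / (2 * s)) ≤ mollify ρ s z := by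
  have h_le : ∀ᵐ x ∂ρ,
      gaussDensity s 0 * exp (-(|z| + B) ^ 2 / (2 * s)) ≤ gaussDensity s (z - x) := by
    filter_upwards [hB] with x hx
    have h_sq : (z - x) ^ 2 ≤ (|z| + B) ^ 2 :=
      sq_le_sq.mpr ((abs_sub z x).trans ((by gcongr : _ ≤ |z| + B).trans (le_abs_self _)))
    have := (gaussDensity_pos hs 0).le
    rw [gaussDensity_eq_zero_mul_exp s (z - x)]
    gcongr
  simpa [mollify] using
    integral_mono_ae (integrable_const _) (integrable_gaussDensity_sub hs z) h_le

lemma mollify_pos (hs : 0 < s) (hB : ∀ᵐ x ∂ρ, |x| ≤ B) (z : ℝ) : 0 < mollify ρ s z :=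
  (mul_pos (gaussDensity_pos hs 0) (exp_pos _)).trans_le (le_mollify hs hB z)

lemma le_log_mollify (hs : 0 < s) (hB : ∀ᵐ x ∂ρ, |x| ≤ B) (z : ℝ) :
    log (gaussDensity s 0) - (|z| + B) ^ 2 / (2 * s) ≤ log (mollify ρ s z) := by
  have h0 := gaussDensity_pos hs 0
  have h := log_le_log (by positivity) (le_mollify hs hB z)
  rwa [log_mul h0.ne' (exp_pos _).ne', log_exp, neg_div, ← sub_eq_add_neg] at h

lemma log_mollify_le (hs : 0 < s) (hB : ∀ᵐ x ∂ρ, |x| ≤ B) (z : ℝ) :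
    log (mollify ρ s z) ≤ log (gaussDensity s 0) :=
  log_le_log (mollify_pos hs hB z) (mollify_le hs z)

lemma continuous_log_mollify (hs : 0 < s) (hB : ∀ᵐ x ∂ρ, |x| ≤ B) :
    Continuous fun z ↦ log (mollify ρ s z) :=
  (continuous_mollify hs).log fun z ↦ (mollify_pos hs hB z).ne'

lemma conv_centeredGaussian_eq_withDensity (hs : 0 < s) :
    ρ ∗ centeredGaussian s = volume.withDensity fun z ↦ ENNReal.ofReal (mollify ρ s z) := by
  refine Measure.ext_of_lintegral _ fun g hg ↦ ?_
  have h_kernel : Measurable fun p : ℝ × ℝ ↦ ENNReal.ofReal (gaussDensity s (p.2 - p.1)) * g p.2 :=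
    (by fun_prop : Continuous fun p : ℝ × ℝ ↦ gaussDensity s (p.2 - p.1)).measurable.ennreal_ofReal
      |>.mul (hg.comp measurable_snd)
  have h_translate (x : ℝ) : ∫⁻ y, g (x + y) ∂centeredGaussian s
      = ∫⁻ z, ENNReal.ofReal (gaussDensity s (z - x)) * g z := by
    rw [centeredGaussian_eq_withDensity hs, lintegral_withDensity_eq_lintegral_mul _
      (continuous_gaussDensity s).measurable.ennreal_ofReal (hg.fun_comp (measurable_const_add x)),
      ← lintegral_add_left_eq_self (fun z ↦ ENNReal.ofReal (gaussDensity s (z - x)) * g z) x]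
    simp only [add_sub_cancel_left, Pi.mul_apply]
  have h_density (z : ℝ) : ∫⁻ x, ENNReal.ofReal (gaussDensity s (z - x)) * g z ∂ρ
      = ENNReal.ofReal (mollify ρ s z) * g z := by
    rw [mollify, ofReal_integral_eq_lintegral_ofReal (integrable_gaussDensity_sub hs z)
      (ae_of_all _ fun _ ↦ (gaussDensity_pos hs _).le)]
    exact lintegral_mul_const _
      (by fun_prop : Continuous fun x ↦ gaussDensity s (z - x)).measurable.ennreal_ofReal
  calc ∫⁻ z, g z ∂(ρ ∗ centeredGaussian s)
      = ∫⁻ x, (∫⁻ z, ENNReal.ofReal (gaussDensity s (z - x)) * g z) ∂ρ := by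
        rw [Measure.lintegral_conv hg, lintegral_congr h_translate]
    _ = ∫⁻ z, ENNReal.ofReal (mollify ρ s z) * g z := by
        rw [lintegral_lintegral_swap h_kernel.aemeasurable, lintegral_congr h_density]
    _ = _ := (lintegral_withDensity_eq_lintegral_mul _
        (continuous_mollify hs).measurable.ennreal_ofReal hg).symm

lemma integral_conv_centeredGaussian (hs : 0 < s) (φ : ℝ → ℝ) :
    ∫ z, φ z ∂(ρ ∗ centeredGaussian s) = ∫ z, mollify ρ s z * φ z := by
  rw [conv_centeredGaussian_eq_withDensity hs, integral_withDensity_ofReal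
    (continuous_mollify hs).measurable (mollify_nonneg hs)]

lemma integrable_conv_centeredGaussian_iff (hs : 0 < s) {φ : ℝ → ℝ} :
    Integrable φ (ρ ∗ centeredGaussian s) ↔ Integrable fun z ↦ mollify ρ s z * φ z := by
  rw [conv_centeredGaussian_eq_withDensity hs, integrable_withDensity_ofReal_iff
    (continuous_mollify hs).measurable (mollify_nonneg hs)]

lemma integrable_mollify (hs : 0 < s) : Integrable (mollify ρ s) := by
  simpa using (integrable_conv_centeredGaussian_iff (ρ := ρ) hs).mp (integrable_const 1)

lemma integral_mollify (hs : 0 < s) : ∫ z, mollify ρ s z = 1 := by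
  simpa using (integral_conv_centeredGaussian (ρ := ρ) hs fun _ ↦ 1).symm

/-- Chapman–Kolmogorov: both sides are continuous densities of the Gaussian of variance `t + s`. -/
lemma mollify_centeredGaussian (hs : 0 < s) (ht : 0 < t) :
    mollify (centeredGaussian t) s = gaussDensity (t + s) := by
  have h_ae : (fun z ↦ ENNReal.ofReal (mollify (centeredGaussian t) s z))
      =ᵐ[volume] fun z ↦ ENNReal.ofReal (gaussDensity (t + s) z) := by
    refine (withDensity_eq_iff_of_sigmaFinite
      (continuous_mollify hs).measurable.ennreal_ofReal.aemeasurable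
      (continuous_gaussDensity _).measurable.ennreal_ofReal.aemeasurable).mp ?_
    rw [← conv_centeredGaussian_eq_withDensity hs, centeredGaussian_conv ht.le hs.le,
      centeredGaussian_eq_withDensity (add_pos ht hs)]
  refine Continuous.ae_eq_iff_eq volume (continuous_mollify hs) (continuous_gaussDensity _) |>.mp ?_
  filter_upwards [h_ae] with z hz
  rwa [ENNReal.ofReal_eq_ofReal_iff (mollify_nonneg hs z)
    (gaussDensity_pos (add_pos ht hs) z).le] at hz

lemma integrable_abs_add_sq_conv (hB : ∀ᵐ x ∂ρ, |x| ≤ B) (s : ℝ) :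
    Integrable (fun z ↦ (|z| + B) ^ 2) (ρ ∗ centeredGaussian s) := by
  refine (integrable_map_measure (by fun_prop) (by fun_prop)).mpr ?_
  refine ((integrable_abs_add_sq_centeredGaussian s (2 * B)).comp_snd ρ).mono' (by fun_prop) ?_
  filter_upwards [ae_abs_fst_add_snd_add_sq_le hB s] with p hp
  rwa [Function.comp_apply, Real.norm_eq_abs, abs_sq]

lemma integral_abs_add_sq_conv_le (hB : ∀ᵐ x ∂ρ, |x| ≤ B) (s : ℝ) :
    ∫ z, (|z| + B) ^ 2 ∂(ρ ∗ centeredGaussian s)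
      ≤ ∫ u, (|u| + 2 * B) ^ 2 ∂centeredGaussian s := by
  rw [Measure.conv, integral_map (by fun_prop) (by fun_prop)]
  refine (integral_mono_of_nonneg (ae_of_all _ fun _ ↦ sq_nonneg _)
    ((integrable_abs_add_sq_centeredGaussian s (2 * B)).comp_snd ρ)
    (ae_abs_fst_add_snd_add_sq_le hB s)).trans_eq ?_
  simpa using integral_fun_snd (μ := ρ) (ν := centeredGaussian s) fun u ↦ (|u| + 2 * B) ^ 2

lemma integrable_log_mollify (ht : 0 < t) (hB : ∀ᵐ x ∂ρ, |x| ≤ B) (s : ℝ) :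
    Integrable (fun z ↦ log (mollify ρ t z)) (ρ ∗ centeredGaussian s) := by
  refine Integrable.mono' (g := fun z ↦ |log (gaussDensity t 0)| + (|z| + B) ^ 2 / (2 * t))
    ((integrable_const _).add ((integrable_abs_add_sq_conv hB s).div_const _))
    (continuous_log_mollify ht hB).aestronglyMeasurable (ae_of_all _ fun z ↦ ?_)
  have h_quad : 0 ≤ (|z| + B) ^ 2 / (2 * t) := by positivity
  rw [Real.norm_eq_abs, abs_le]
  constructor
  · linarith [le_log_mollify ht hB z, neg_abs_le (log (gaussDensity t 0))]
  · linarith [log_mollify_le ht hB z, le_abs_self (log (gaussDensity t 0))]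

lemma le_negEntropy_one (hB : ∀ᵐ x ∂ρ, |x| ≤ B) :
    log (gaussDensity 1 0) - (∫ u, (|u| + 2 * B) ^ 2 ∂centeredGaussian 1) / 2 ≤ negEntropy ρ 1 := by
  have h_int := integrable_abs_add_sq_conv hB 1
  calc _ ≤ log (gaussDensity 1 0) - (∫ z, (|z| + B) ^ 2 ∂(ρ ∗ centeredGaussian 1)) / 2 := by
        linarith [integral_abs_add_sq_conv_le hB 1]
    _ = ∫ z, (log (gaussDensity 1 0) - (|z| + B) ^ 2 / 2) ∂(ρ ∗ centeredGaussian 1) := by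
        rw [integral_sub (integrable_const _) (h_int.div_const _), integral_div]
        simp
    _ ≤ negEntropy ρ 1 :=
        integral_mono ((integrable_const _).sub (h_int.div_const _))
          (integrable_log_mollify one_pos hB 1) fun z ↦ by simpa using le_log_mollify one_pos hB z

end Mollify

section ChiSquared

/-! ### Entropy drop and the heat flow -/

open scoped BoundedContinuousFunction

/-- The Radon–Nikodym density of the centred Gaussian of variance `s` with respect to the one of
variance `c`. -/
noncomputable def gaussRatio (s c x : ℝ) : ℝ := gaussDensity s x / gaussDensity c x

variable {s t c : ℝ}

lemma continuous_gaussRatio (s : ℝ) (hc : 0 < c) : Continuous (gaussRatio s c) :=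
  (continuous_gaussDensity s).div (continuous_gaussDensity c) fun x ↦ (gaussDensity_pos hc x).ne'

lemma abs_gaussRatio_le (hs : 0 < s) (hsc : s ≤ c) (x : ℝ) :
    |gaussRatio s c x| ≤ gaussDensity s 0 / gaussDensity c 0 := by
  have hc : 0 < c := hs.trans_le hsc
  have h_exp : exp (-x ^ 2 / (2 * s)) / exp (-x ^ 2 / (2 * c)) ≤ 1 := by
    rw [div_le_one (exp_pos _), exp_le_exp, neg_div, neg_div, neg_le_neg_iff]
    gcongr
  rw [gaussRatio, abs_of_pos (div_pos (gaussDensity_pos hs x) (gaussDensity_pos hc x)),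
    gaussDensity_eq_zero_mul_exp s x, gaussDensity_eq_zero_mul_exp c x, mul_div_mul_comm]
  exact mul_le_of_le_one_right (div_pos (gaussDensity_pos hs 0) (gaussDensity_pos hc 0)).le h_exp

lemma memLp_gaussRatio (hs : 0 < s) (hsc : s ≤ c) (p : ENNReal) :
    MemLp (gaussRatio s c) p (centeredGaussian c) :=
  .of_bound (continuous_gaussRatio s (hs.trans_le hsc)).aestronglyMeasurable _
    (ae_of_all _ (abs_gaussRatio_le hs hsc))

lemma memLp_gaussRatio_sub_one (hs : 0 < s) (hsc : s ≤ c) (p : ENNReal) :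
    MemLp (fun x ↦ gaussRatio s c x - 1) p (centeredGaussian c) :=
  (memLp_gaussRatio hs hsc p).sub (memLp_const 1)

lemma integral_gaussRatio_mul (hs : 0 < s) (hc : 0 < c) (φ : ℝ → ℝ) :
    ∫ x, gaussRatio s c x * φ x ∂centeredGaussian c = ∫ x, φ x ∂centeredGaussian s := by
  rw [integral_centeredGaussian hs, integral_centeredGaussian hc]
  congr 1 with x
  rw [gaussRatio, ← mul_assoc, mul_div_cancel₀ _ (gaussDensity_pos hc x).ne']

lemma integral_gaussRatio (hs : 0 < s) (hc : 0 < c) :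
    ∫ x, gaussRatio s c x ∂centeredGaussian c = 1 := by
  simpa using integral_gaussRatio_mul hs hc fun _ ↦ 1

lemma integral_gaussRatio_sub_one (hs : 0 < s) (hsc : s ≤ c) :
    ∫ x, (gaussRatio s c x - 1) ∂centeredGaussian c = 0 := by
  rw [integral_sub ((memLp_gaussRatio hs hsc 1).integrable le_rfl) (integrable_const 1),
    integral_gaussRatio hs (hs.trans_le hsc)]
  simp

lemma gaussDensity_mul_gaussRatio_sq (hs : 0 < s) (ht : 0 < t) (x : ℝ) :
    gaussDensity (s + t) x * gaussRatio s (s + t) x ^ 2 =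
      (2 * π * s)⁻¹ * √(2 * π * (s + t)) * exp (-((s + 2 * t) / (2 * s * (s + t))) * x ^ 2) := by
  have h_exponent : -((s + 2 * t) / (2 * s * (s + t))) * x ^ 2 =
      (2 : ℕ) * (-x ^ 2 / (2 * s)) + -(-x ^ 2 / (2 * (s + t))) := by
    push_cast
    field_simp
    ring
  have h_cancel : gaussDensity (s + t) x * gaussRatio s (s + t) x ^ 2 =
      gaussDensity s x ^ 2 * (gaussDensity (s + t) x)⁻¹ := by
    have := (gaussDensity_pos (add_pos hs ht) x).ne'
    rw [gaussRatio]
    field_simp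
  rw [h_cancel, h_exponent, exp_add, exp_nat_mul, exp_neg, gaussDensity, gaussDensity, mul_inv,
    inv_inv, mul_pow, inv_pow, sq_sqrt (by positivity)]
  ring

lemma integral_gaussRatio_sq (hs : 0 < s) (ht : 0 < t) :
    ∫ x, gaussRatio s (s + t) x ^ 2 ∂centeredGaussian (s + t) = (√(1 - (t / (s + t)) ^ 2))⁻¹ := by
  rw [integral_centeredGaussian (add_pos hs ht)]
  simp_rw [gaussDensity_mul_gaussRatio_sq hs ht]
  rw [integral_const_mul, integral_gaussian, mul_assoc, ← sqrt_mul (by positivity), ← sqrt_inv,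
    ← sqrt_sq (by positivity : 0 ≤ (2 * π * s)⁻¹), ← sqrt_mul (by positivity)]
  have h_one_sub : 1 - (t / (s + t)) ^ 2 = s * (s + 2 * t) / (s + t) ^ 2 := by field_simp; ring
  rw [h_one_sub]
  congr 1
  field_simp

lemma inv_sqrt_one_sub_le {x : ℝ} (hx0 : 0 ≤ x) (hx : x ≤ 1 / 16) :
    (√(1 - x))⁻¹ ≤ 1 + 9 / 16 * x := by
  have h_sqrt : (1 + 9 / 16 * x)⁻¹ ≤ √(1 - x) := by
    refine Real.le_sqrt_of_sq_le ?_
    rw [inv_pow, inv_le_iff_one_le_mul₀ (by positivity)]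
    nlinarith [mul_nonneg hx0 hx0, mul_nonneg (mul_nonneg hx0 hx0) (sub_nonneg.mpr hx),
      mul_nonneg hx0 (sub_nonneg.mpr hx)]
  exact (inv_anti₀ (by positivity) h_sqrt).trans_eq (inv_inv _)

lemma integral_gaussRatio_sub_one_sq_le (hs : 0 < s) (ht : 0 < t) (hts : 3 * t ≤ s) :
    ∫ x, (gaussRatio s (s + t) x - 1) ^ 2 ∂centeredGaussian (s + t)
      ≤ (3 / 4 * (t / (s + t))) ^ 2 := by
  have hst : s ≤ s + t := by linarith
  have h_lin := ((memLp_gaussRatio hs hst 1).integrable le_rfl).const_mul 2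
  have h_sq := (memLp_gaussRatio hs hst 2).integrable_sq
  have h_diff : Integrable (fun x ↦ gaussRatio s (s + t) x ^ 2 - 2 * gaussRatio s (s + t) x)
    (centeredGaussian (s + t)) := h_sq.sub h_lin
  have h_ratio : t / (s + t) ≤ 1 / 4 := by rw [div_le_iff₀ (by positivity)]; linarith
  have h_small : (t / (s + t)) ^ 2 ≤ 1 / 16 :=
    (pow_le_pow_left₀ (by positivity) h_ratio 2).trans_eq (by norm_num)
  calc ∫ x, (gaussRatio s (s + t) x - 1) ^ 2 ∂centeredGaussian (s + t)
      = ∫ x, (gaussRatio s (s + t) x ^ 2 - 2 * gaussRatio s (s + t) x + 1)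
          ∂centeredGaussian (s + t) := by congr 1 with x; ring
    _ = (√(1 - (t / (s + t)) ^ 2))⁻¹ - 1 := by
        rw [integral_add h_diff (integrable_const _), integral_sub h_sq h_lin,
          integral_const_mul, integral_gaussRatio hs (hs.trans_le hst),
          integral_gaussRatio_sq hs ht, integral_const, probReal_univ, one_smul]
        ring
    _ ≤ (3 / 4 * (t / (s + t))) ^ 2 := by linarith [inv_sqrt_one_sub_le (sq_nonneg _) h_small]

lemma integral_sub_integral_centeredGaussian (hs : 0 < s) (hsc : s ≤ c) (φ : ℝ →ᵇ ℝ) :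
    ∫ x, φ x ∂centeredGaussian s - ∫ x, φ x ∂centeredGaussian c =
      ∫ x, (gaussRatio s c x - 1) * φ x ∂centeredGaussian c := by
  rw [← integral_gaussRatio_mul hs (hs.trans_le hsc) φ, ← integral_sub]
  · congr 1 with x; ring
  · exact ((memLp_gaussRatio hs hsc 1).integrable le_rfl).mul_bdd
      φ.continuous.aestronglyMeasurable (ae_of_all _ φ.norm_coe_le_norm)
  · exact φ.integrable _

lemma abs_integral_mul_le_of_integral_sq_le {Ω : Type*} [MeasurableSpace Ω] {P : Measure Ω}
    [IsProbabilityMeasure P] {q φ : Ω → ℝ} {κ C : ℝ} (hq : MemLp q 2 P) (hκ : 0 ≤ κ)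
    (hqκ : ∫ ω, q ω ^ 2 ∂P ≤ κ ^ 2) (hC : 0 ≤ C) (hφ : ∀ ω, |φ ω| ≤ C) :
    |∫ ω, q ω * φ ω ∂P| ≤ κ * C := by
  have h_var : ProbabilityTheory.variance |q| P = ∫ ω, q ω ^ 2 ∂P - (∫ ω, |q ω| ∂P) ^ 2 := by
    simpa using ProbabilityTheory.variance_eq_sub hq.abs
  have h_abs : ∫ ω, |q ω| ∂P ≤ κ :=
    abs_le_of_sq_le_sq' (by linarith [ProbabilityTheory.variance_nonneg |q| P]) hκ |>.2
  calc |∫ ω, q ω * φ ω ∂P| ≤ ∫ ω, |q ω| * C ∂P := by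
        refine norm_integral_le_of_norm_le (f := fun ω ↦ q ω * φ ω)
          ((hq.integrable one_le_two).abs.mul_const C) (ae_of_all _ fun ω ↦ ?_)
        rw [norm_mul]
        exact mul_le_mul_of_nonneg_left (hφ ω) (abs_nonneg _)
    _ ≤ κ * C := by rw [integral_mul_const]; gcongr

lemma abs_integral_sub_integral_centeredGaussian_le (hs : 0 < s) (ht : 0 < t) (hts : 3 * t ≤ s)
    (φ : ℝ →ᵇ ℝ) :
    |∫ x, φ x ∂centeredGaussian s - ∫ x, φ x ∂centeredGaussian (s + t)|
      ≤ 3 / 4 * (t / (s + t)) * ‖φ‖ := by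
  have hst : s ≤ s + t := by linarith
  rw [integral_sub_integral_centeredGaussian hs hst]
  exact abs_integral_mul_le_of_integral_sq_le (memLp_gaussRatio_sub_one hs hst 2) (by positivity)
    (integral_gaussRatio_sub_one_sq_le hs ht hts) (norm_nonneg φ) φ.norm_coe_le_norm

lemma integrable_gaussRatio_sub_one_mul {P : Measure ℝ} [IsProbabilityMeasure P] (hs : 0 < s)
    (hsc : s ≤ c) (φ : ℝ →ᵇ ℝ) :
    Integrable (fun p : ℝ × ℝ ↦ (gaussRatio s c p.2 - 1) * φ (p.1 + p.2))
      (P.prod (centeredGaussian c)) :=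
  (((memLp_gaussRatio_sub_one hs hsc 1).integrable le_rfl).comp_snd P).mul_bdd (by fun_prop)
    (ae_of_all _ fun _ ↦ φ.norm_coe_le_norm _)

lemma integral_conv_sub_integral_conv_centeredGaussian {P : Measure ℝ} [IsProbabilityMeasure P]
    (hs : 0 < s) (hsc : s ≤ c) (φ : ℝ →ᵇ ℝ) :
    ∫ z, φ z ∂(P ∗ centeredGaussian s) - ∫ z, φ z ∂(P ∗ centeredGaussian c) =
      ∫ p, (gaussRatio s c p.2 - 1) * φ (p.1 + p.2) ∂P.prod (centeredGaussian c) := by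
  have h_int (v : ℝ) : Integrable (fun x ↦ ∫ y, φ (x + y) ∂centeredGaussian v) P :=
    (φ.integrable (P ∗ centeredGaussian v)).comp_measurable
      (measurable_fst.add measurable_snd) |>.integral_prod_left
  rw [integral_conv (φ.integrable _), integral_conv (φ.integrable _),
    ← integral_sub (h_int s) (h_int c),
    integral_prod _ (integrable_gaussRatio_sub_one_mul hs hsc φ)]
  congr 1 with x
  exact integral_sub_integral_centeredGaussian hs hsc
    (φ.compContinuous ⟨fun y ↦ x + y, by fun_prop⟩)

end ChiSquared

section RelativeEntropy

/-- The integrand `a log (a / m) - a + m` of the relative entropy of the density `a` with respect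
to the density `m`. -/
noncomputable def relEntropyIntegrand (a m : ℝ) : ℝ := a * log a - a * log m - a + m

variable {a m : ℝ}

lemma sq_sub_sqrt_le_relEntropyIntegrand {u v : ℝ} (hu : 0 < u) (hv : 0 < v) :
    (u - v) ^ 2 ≤ relEntropyIntegrand (u ^ 2) (v ^ 2) := by
  have h_log : 1 - v / u ≤ log u - log v := by
    simpa [log_div hu.ne' hv.ne'] using Real.one_sub_inv_le_log_of_pos (div_pos hu hv)
  have h_mul : u ^ 2 - u * v ≤ u ^ 2 * (log u - log v) :=
    (by field_simp : u ^ 2 - u * v = u ^ 2 * (1 - v / u)).trans_le (by gcongr)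
  rw [relEntropyIntegrand, log_pow, log_pow]
  push_cast
  linarith

lemma sq_sub_le_relEntropyIntegrand (ha : 0 < a) (hm : 0 < m) :
    (a - m) ^ 2 ≤ 2 * (a + m) * relEntropyIntegrand a m := by
  obtain ⟨u, hu, rfl⟩ : ∃ u, 0 < u ∧ u ^ 2 = a := ⟨√a, sqrt_pos.mpr ha, sq_sqrt ha.le⟩
  obtain ⟨v, hv, rfl⟩ : ∃ v, 0 < v ∧ v ^ 2 = m := ⟨√m, sqrt_pos.mpr hm, sq_sqrt hm.le⟩
  calc (u ^ 2 - v ^ 2) ^ 2 = (u + v) ^ 2 * (u - v) ^ 2 := by ring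
    _ ≤ 2 * (u ^ 2 + v ^ 2) * relEntropyIntegrand (u ^ 2) (v ^ 2) :=
        mul_le_mul (add_sq_le ..) (sq_sub_sqrt_le_relEntropyIntegrand hu hv) (sq_nonneg _)
          (by positivity)

lemma relEntropyIntegrand_nonneg (ha : 0 < a) (hm : 0 < m) : 0 ≤ relEntropyIntegrand a m :=
  nonneg_of_mul_nonneg_right ((sq_nonneg _).trans (sq_sub_le_relEntropyIntegrand ha hm))
    (by positivity)

lemma abs_sub_mul_le_relEntropyIntegrand {α : ℝ} (ha : 0 < a) (hm : 0 < m) (hα : 0 < α) (q : ℝ) :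
    |(a - m) * q| ≤ α * (a * q ^ 2 + m * q ^ 2) + α⁻¹ / 2 * relEntropyIntegrand a m := by
  have h_entropy := relEntropyIntegrand_nonneg ha hm
  set Φ := relEntropyIntegrand a m
  have h_sq : ((a - m) * q) ^ 2 ≤ 4 * (α * (a * q ^ 2 + m * q ^ 2)) * (α⁻¹ / 2 * Φ) :=
    calc ((a - m) * q) ^ 2 = (a - m) ^ 2 * q ^ 2 := mul_pow _ _ _
      _ ≤ 2 * (a + m) * Φ * q ^ 2 := by gcongr; exact sq_sub_le_relEntropyIntegrand ha hm
      _ = 4 * (α * (a * q ^ 2 + m * q ^ 2)) * (α⁻¹ / 2 * Φ) := by field_simp; ring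
  exact abs_le_of_sq_le_sq (h_sq.trans (four_mul_le_sq_add _ _)) (by positivity)

/-- Integrating `abs_sub_mul_le_relEntropyIntegrand` at the optimal `α = δ / (2 κ)` yields a
weighted Pinsker inequality. -/
lemma abs_integral_sub_mul_mul_le {Ω : Type*} [MeasurableSpace Ω] {P : Measure Ω}
    {a m q φ : Ω → ℝ} {κ δ C : ℝ} (hκ : 0 < κ) (hδ : 0 < δ) (hC : 0 ≤ C)
    (ha : ∀ ω, 0 < a ω) (hm : ∀ ω, 0 < m ω) (hφ : ∀ ω, |φ ω| ≤ C)
    (haq : Integrable (fun ω ↦ a ω * q ω ^ 2) P) (haq_le : ∫ ω, a ω * q ω ^ 2 ∂P ≤ κ ^ 2)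
    (hmq : Integrable (fun ω ↦ m ω * q ω ^ 2) P) (hmq_le : ∫ ω, m ω * q ω ^ 2 ∂P ≤ κ ^ 2)
    (hent : Integrable (fun ω ↦ relEntropyIntegrand (a ω) (m ω)) P)
    (hent_le : ∫ ω, relEntropyIntegrand (a ω) (m ω) ∂P ≤ δ ^ 2) :
    |∫ ω, (a ω - m ω) * q ω * φ ω ∂P| ≤ 2 * κ * δ * C := by
  set α := δ / (2 * κ) with hα_def
  have hα : 0 < α := by positivity
  have h_weight : Integrable (fun ω ↦ α * (a ω * q ω ^ 2 + m ω * q ω ^ 2)) P :=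
    (haq.add hmq).const_mul α
  have h_dom : Integrable (fun ω ↦ α * (a ω * q ω ^ 2 + m ω * q ω ^ 2)
      + α⁻¹ / 2 * relEntropyIntegrand (a ω) (m ω)) P := h_weight.add (hent.const_mul _)
  have h_pointwise (ω : Ω) : ‖(a ω - m ω) * q ω * φ ω‖ ≤ (α * (a ω * q ω ^ 2 + m ω * q ω ^ 2)
      + α⁻¹ / 2 * relEntropyIntegrand (a ω) (m ω)) * C := by
    rw [norm_mul]
    have h := abs_sub_mul_le_relEntropyIntegrand (ha ω) (hm ω) hα (q ω)
    exact mul_le_mul h (hφ ω) (abs_nonneg _) ((abs_nonneg _).trans h)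
  calc |∫ ω, (a ω - m ω) * q ω * φ ω ∂P|
      ≤ ∫ ω, (α * (a ω * q ω ^ 2 + m ω * q ω ^ 2)
          + α⁻¹ / 2 * relEntropyIntegrand (a ω) (m ω)) * C ∂P :=
        norm_integral_le_of_norm_le (h_dom.mul_const C) (ae_of_all _ h_pointwise)
    _ = (α * (∫ ω, a ω * q ω ^ 2 ∂P + ∫ ω, m ω * q ω ^ 2 ∂P)
          + α⁻¹ / 2 * ∫ ω, relEntropyIntegrand (a ω) (m ω) ∂P) * C := by
        rw [integral_mul_const, integral_add h_weight (hent.const_mul _), integral_const_mul,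
          integral_add haq hmq, integral_const_mul]
    _ ≤ (α * (κ ^ 2 + κ ^ 2) + α⁻¹ / 2 * δ ^ 2) * C := by gcongr
    _ = 2 * κ * δ * C := by rw [hα_def]; field_simp; ring

end RelativeEntropy

section Shear

variable {ν : Measure ℝ} [SFinite ν] {g h : ℝ → ℝ}

lemma integrable_shear_mul (hg : Integrable g) (hh : Integrable h ν) :
    Integrable (fun p : ℝ × ℝ ↦ g (p.1 + p.2) * h p.2) (volume.prod ν) :=
  (measurePreserving_add_prod volume ν).integrable_comp_of_integrable (hg.mul_prod hh)

lemma integral_shear_mul (hg : Integrable g) (hh : Integrable h ν) :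
    ∫ p : ℝ × ℝ, g (p.1 + p.2) * h p.2 ∂volume.prod ν = (∫ x, g x) * ∫ y, h y ∂ν := by
  have h_pres := measurePreserving_add_prod volume ν
  have h_map := integral_map (f := fun p : ℝ × ℝ ↦ g p.1 * h p.2) h_pres.measurable.aemeasurable
    (by rw [h_pres.map_eq]; exact (hg.mul_prod hh).aestronglyMeasurable)
  rw [← integral_prod_mul, ← h_map, h_pres.map_eq]

end Shear

section EntropyDrop

open scoped BoundedContinuousFunction

variable {ρ ν : Measure ℝ} {s r t c B : ℝ}

lemma conv_centeredGaussian_conv [SFinite ρ] (hs : 0 ≤ s) (hc : 0 ≤ c) :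
    (ρ ∗ centeredGaussian s) ∗ centeredGaussian c = ρ ∗ centeredGaussian (s + c) := by
  rw [Measure.conv_assoc, centeredGaussian_conv hs hc]

variable [IsProbabilityMeasure ρ]

lemma prod_conv_centeredGaussian_eq_withDensity [SFinite ν] (hs : 0 < s) :
    (ρ ∗ centeredGaussian s).prod ν =
      (volume.prod ν).withDensity fun p ↦ ENNReal.ofReal (mollify ρ s p.1) := by
  rw [conv_centeredGaussian_eq_withDensity hs,
    prod_withDensity_left (continuous_mollify hs).measurable.ennreal_ofReal]

lemma integral_prod_conv_centeredGaussian [SFinite ν] (hs : 0 < s) (ψ : ℝ × ℝ → ℝ) :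
    ∫ p, ψ p ∂(ρ ∗ centeredGaussian s).prod ν = ∫ p, mollify ρ s p.1 * ψ p ∂volume.prod ν := by
  rw [prod_conv_centeredGaussian_eq_withDensity hs, integral_withDensity_ofReal
    ((continuous_mollify hs).measurable.fun_comp measurable_fst) fun p ↦ mollify_nonneg hs p.1]

lemma integrable_mollify_fst_mul [SFinite ν] (hs : 0 < s) {ψ : ℝ × ℝ → ℝ}
    (hψ : Integrable ψ ((ρ ∗ centeredGaussian s).prod ν)) :
    Integrable (fun p ↦ mollify ρ s p.1 * ψ p) (volume.prod ν) := by
  rwa [prod_conv_centeredGaussian_eq_withDensity hs, integrable_withDensity_ofReal_iff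
    ((continuous_mollify hs).measurable.fun_comp measurable_fst) fun p ↦ mollify_nonneg hs p.1]
    at hψ

lemma integrable_log_mollify_add (hs : 0 < s) (hc : 0 < c) (hB : ∀ᵐ x ∂ρ, |x| ≤ B) :
    Integrable (fun p : ℝ × ℝ ↦ log (mollify ρ (s + c) (p.1 + p.2)))
      ((ρ ∗ centeredGaussian s).prod (centeredGaussian c)) := by
  have h_log := integrable_log_mollify (add_pos hs hc) hB (s + c)
  rw [← conv_centeredGaussian_conv hs.le hc.le] at h_log
  exact (integrable_map_measure
    (continuous_log_mollify (add_pos hs hc) hB).aestronglyMeasurable (by fun_prop)).mp h_log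

lemma integral_mollify_mul_log_mollify_add (hs : 0 < s) (hc : 0 < c) (hB : ∀ᵐ x ∂ρ, |x| ≤ B) :
    ∫ p : ℝ × ℝ, mollify ρ s p.1 * log (mollify ρ (s + c) (p.1 + p.2))
      ∂volume.prod (centeredGaussian c) = negEntropy ρ (s + c) := by
  rw [← integral_prod_conv_centeredGaussian hs, negEntropy,
    ← conv_centeredGaussian_conv hs.le hc.le]
  exact (integral_map (φ := fun p : ℝ × ℝ ↦ p.1 + p.2) (by fun_prop)
    (continuous_log_mollify (add_pos hs hc) hB).aestronglyMeasurable).symm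

lemma integral_mollify_mul_log_mollify (hs : 0 < s) :
    ∫ p : ℝ × ℝ, mollify ρ s p.1 * log (mollify ρ s p.1) ∂volume.prod (centeredGaussian c) =
      negEntropy ρ s := by
  rw [negEntropy, integral_conv_centeredGaussian hs,
    integral_fun_fst fun x ↦ mollify ρ s x * log (mollify ρ s x), probReal_univ, one_smul]

lemma integrable_relEntropyIntegrand_mollify_and_integral_eq (hs : 0 < s) (hc : 0 < c)
    (hB : ∀ᵐ x ∂ρ, |x| ≤ B) :
    Integrable (fun p : ℝ × ℝ ↦
      relEntropyIntegrand (mollify ρ s p.1) (mollify ρ (s + c) (p.1 + p.2)))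
      (volume.prod (centeredGaussian c)) ∧
    ∫ p : ℝ × ℝ, relEntropyIntegrand (mollify ρ s p.1) (mollify ρ (s + c) (p.1 + p.2))
      ∂volume.prod (centeredGaussian c) = negEntropy ρ s - negEntropy ρ (s + c) := by
  have hsc : 0 < s + c := add_pos hs hc
  have h_self : Integrable (fun p : ℝ × ℝ ↦ mollify ρ s p.1 * log (mollify ρ s p.1))
      (volume.prod (centeredGaussian c)) :=
    ((integrable_conv_centeredGaussian_iff hs).mp (integrable_log_mollify hs hB s)).comp_fst _
  have h_cross := integrable_mollify_fst_mul hs (integrable_log_mollify_add hs hc hB)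
  have h_fst : Integrable (fun p : ℝ × ℝ ↦ mollify ρ s p.1) (volume.prod (centeredGaussian c)) :=
    (integrable_mollify hs).comp_fst _
  have h_add : Integrable (fun p : ℝ × ℝ ↦ mollify ρ (s + c) (p.1 + p.2))
      (volume.prod (centeredGaussian c)) := by
    simpa using integrable_shear_mul (integrable_mollify hsc) (integrable_const (1 : ℝ))
  have h_fst_eq : ∫ p : ℝ × ℝ, mollify ρ s p.1 ∂volume.prod (centeredGaussian c) = 1 := by
    simp [integral_fun_fst (mollify ρ s), integral_mollify hs]
  have h_add_eq : ∫ p : ℝ × ℝ, mollify ρ (s + c) (p.1 + p.2) ∂volume.prod (centeredGaussian c)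
      = 1 := by
    simpa [integral_mollify hsc] using
      integral_shear_mul (ν := centeredGaussian c) (integrable_mollify (ρ := ρ) hsc)
        (integrable_const (1 : ℝ))
  have h_diff := h_self.sub h_cross
  refine ⟨(h_diff.sub h_fst).add h_add, ?_⟩
  simp only [relEntropyIntegrand]
  rw [integral_add (by exact h_diff.sub h_fst) h_add, integral_sub (by exact h_diff) h_fst,
    integral_sub h_self h_cross, integral_mollify_mul_log_mollify hs,
    integral_mollify_mul_log_mollify_add hs hc hB, h_fst_eq, h_add_eq, sub_add_cancel]

lemma negEntropy_antitone (hs : 0 < s) (hst : s ≤ t) (hB : ∀ᵐ x ∂ρ, |x| ≤ B) :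
    negEntropy ρ t ≤ negEntropy ρ s := by
  obtain rfl | hlt := hst.eq_or_lt
  · rfl
  have h_eq := (integrable_relEntropyIntegrand_mollify_and_integral_eq hs (sub_pos.mpr hlt) hB).2
  rw [add_sub_cancel] at h_eq
  rw [← sub_nonneg, ← h_eq]
  exact integral_nonneg fun p ↦
    relEntropyIntegrand_nonneg (mollify_pos hs hB _) (mollify_pos (hs.trans hlt) hB _)

/-- Since `gaussRatio r c - 1` has mean zero, the density of `p.1` may be recentred by that of
`p.1 + p.2`, so that only their discrepancy enters. -/
lemma integral_conv_sub_eq_integral_mollify_sub (hs : 0 < s) (hr : 0 < r) (hrc : r ≤ c)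
    (φ : ℝ →ᵇ ℝ) :
    ∫ z, φ z ∂((ρ ∗ centeredGaussian s) ∗ centeredGaussian r) -
        ∫ z, φ z ∂((ρ ∗ centeredGaussian s) ∗ centeredGaussian c) =
      ∫ p : ℝ × ℝ, (mollify ρ s p.1 - mollify ρ (s + c) (p.1 + p.2)) * (gaussRatio r c p.2 - 1)
        * φ (p.1 + p.2) ∂volume.prod (centeredGaussian c) := by
  have hsc : 0 < s + c := by linarith
  have h_ratio := (memLp_gaussRatio_sub_one hr hrc 1).integrable le_rfl
  have h_test : Integrable fun z ↦ mollify ρ (s + c) z * φ z :=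
    (integrable_conv_centeredGaussian_iff hsc).mp (φ.integrable _)
  have h_zero : ∫ p : ℝ × ℝ, mollify ρ (s + c) (p.1 + p.2) * φ (p.1 + p.2)
      * (gaussRatio r c p.2 - 1) ∂volume.prod (centeredGaussian c) = 0 := by
    rw [integral_shear_mul h_test h_ratio, integral_gaussRatio_sub_one hr hrc, mul_zero]
  rw [integral_conv_sub_integral_conv_centeredGaussian hr hrc,
    integral_prod_conv_centeredGaussian hs, ← sub_zero (∫ _, _ ∂_), ← h_zero, ← integral_sub
      (integrable_mollify_fst_mul hs (integrable_gaussRatio_sub_one_mul hr hrc φ))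
      (integrable_shear_mul h_test h_ratio)]
  congr 1 with p
  ring

/-- If the entropy of `ρ` smoothed at scale `s` barely changes up to the scale `s + (r + t)`, then
`ρ ∗ centeredGaussian s` is nearly blind to the difference of the Gaussians of variance `r` and
`r + t`. -/
lemma abs_integral_conv_sub_integral_conv_le {δ : ℝ} (hB : ∀ᵐ x ∂ρ, |x| ≤ B) (hs : 0 < s)
    (ht : 0 < t) (htr : 3 * t ≤ r) (hδ : 0 < δ)
    (h_drop : negEntropy ρ s - negEntropy ρ (s + (r + t)) ≤ δ ^ 2) (φ : ℝ →ᵇ ℝ) :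
    |∫ z, φ z ∂((ρ ∗ centeredGaussian s) ∗ centeredGaussian r) -
        ∫ z, φ z ∂((ρ ∗ centeredGaussian s) ∗ centeredGaussian (r + t))|
      ≤ 2 * (3 / 4 * (t / (r + t))) * δ * ‖φ‖ := by
  have hr : 0 < r := by linarith
  have hrc : r ≤ r + t := by linarith
  have hsc : 0 < s + (r + t) := by positivity
  have h_chi := integral_gaussRatio_sub_one_sq_le hr ht htr
  have h_sq := (memLp_gaussRatio_sub_one hr hrc 2).integrable_sq
  obtain ⟨h_ent, h_ent_eq⟩ :=
    integrable_relEntropyIntegrand_mollify_and_integral_eq hs (hr.trans_le hrc) hB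
  rw [integral_conv_sub_eq_integral_mollify_sub hs hr hrc]
  refine abs_integral_sub_mul_mul_le (by positivity) hδ (norm_nonneg φ)
    (fun p ↦ mollify_pos hs hB _) (fun p ↦ mollify_pos hsc hB _) (fun p ↦ φ.norm_coe_le_norm _)
    ((integrable_mollify hs).mul_prod h_sq) ?_
    (integrable_shear_mul (integrable_mollify hsc) h_sq) ?_ h_ent (h_ent_eq.trans_le h_drop)
  · rwa [integral_prod_mul (mollify ρ s) fun y ↦ (gaussRatio r (r + t) y - 1) ^ 2,
      integral_mollify hs, one_mul]
  · rwa [integral_shear_mul (integrable_mollify hsc) h_sq, integral_mollify hsc, one_mul]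

end EntropyDrop

section SignSum

/-! ### Random signed sums -/

open Finset

/-- The law of a random variable equal to `a` or `-a` with probability `1 / 2` each. -/
noncomputable def fairCoin (a : ℝ) : Measure ℝ :=
  (2⁻¹ : ENNReal) • Measure.dirac a + (2⁻¹ : ENNReal) • Measure.dirac (-a)

/-- The law of the random signed sum `∑ k < L, ± a k` with independent fair signs. -/
noncomputable def signSum (a : ℕ → ℝ) : ℕ → Measure ℝ
  | 0 => Measure.dirac 0
  | L + 1 => signSum a L ∗ fairCoin (a L)

/-- The value of `∑ k < L, ± a k` when `S` is the set of indices carrying the sign `+`. -/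
def signedSum (a : ℕ → ℝ) (L : ℕ) (S : Finset ℕ) : ℝ :=
  ∑ k ∈ range L, if k ∈ S then a k else -a k

variable {a : ℕ → ℝ} {L : ℕ}

instance (r : ℝ) : IsProbabilityMeasure (fairCoin r) :=
  ⟨by simp [fairCoin, ENNReal.inv_two_add_inv_two]⟩

instance : IsProbabilityMeasure (signSum a L) := by
  induction L with
  | zero => unfold signSum; infer_instance
  | succ L ih => unfold signSum; infer_instance

lemma integral_fairCoin (r : ℝ) (φ : ℝ → ℝ) : ∫ x, φ x ∂fairCoin r = (φ r + φ (-r)) / 2 := by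
  have h_int (x : ℝ) : Integrable φ ((2⁻¹ : ENNReal) • Measure.dirac x) :=
    (integrable_dirac (by simp)).smul_measure (by simp)
  rw [fairCoin, integral_add_measure (h_int r) (h_int (-r))]
  simp only [integral_smul_measure, integral_dirac, ENNReal.toReal_inv, ENNReal.toReal_ofNat,
    smul_eq_mul]
  ring

lemma ae_fairCoin_iff {r : ℝ} {p : ℝ → Prop} :
    (∀ᵐ x ∂fairCoin r, p x) ↔ p r ∧ p (-r) := by
  simp [fairCoin, ae_add_measure_iff]

lemma map_fairCoin (r x : ℝ) : (fairCoin x).map (r * ·) = fairCoin (r * x) := by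
  have hm : Measurable (r * · : ℝ → ℝ) := by fun_prop
  simp [fairCoin, Measure.map_add _ _ hm, Measure.map_smul, Measure.map_dirac' hm]

lemma ae_abs_signSum_le (a : ℕ → ℝ) (L : ℕ) :
    ∀ᵐ x ∂signSum a L, |x| ≤ ∑ k ∈ range L, |a k| := by
  induction L with
  | zero => simp [signSum]
  | succ L ih =>
    have h_coin : ∀ᵐ x ∂fairCoin (a L), |x| ≤ |a L| := by simp [ae_fairCoin_iff]
    rw [signSum, Measure.conv, ae_map_iff (by fun_prop) (measurableSet_le (by fun_prop)
      (by fun_prop)), sum_range_succ]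
    filter_upwards [Measure.quasiMeasurePreserving_fst.ae ih,
      Measure.quasiMeasurePreserving_snd.ae h_coin] with p h1 h2
    exact (abs_add_le _ _).trans (add_le_add h1 h2)

lemma integral_signSum {φ : ℝ → ℝ} {C : ℝ} (hφ : Continuous φ) (hC : ∀ x, |φ x| ≤ C) (L : ℕ) :
    ∫ x, φ x ∂signSum a L = (∑ S ∈ (range L).powerset, φ (signedSum a L S)) / 2 ^ L := by
  induction L generalizing φ with
  | zero => simp [signSum, signedSum]
  | succ L ih =>
    have h_insert (S) : signedSum a (L + 1) (insert L S) = signedSum a L S + a L := by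
      simp only [signedSum, sum_range_succ, mem_insert_self, if_true, add_left_inj]
      exact sum_congr rfl fun k hk ↦ by simp [(mem_range.mp hk).ne]
    have h_keep (S) (hS : S ∈ (range L).powerset) :
        signedSum a (L + 1) S = signedSum a L S + -a L := by
      have : L ∉ S := fun h ↦ by simpa using mem_powerset.mp hS h
      simp [signedSum, sum_range_succ, this]
    have h_int (r : ℝ) : Integrable (fun x ↦ φ (x + r)) (signSum a L) :=
      .of_bound (by fun_prop) C (ae_of_all _ fun x ↦ hC _)
    rw [signSum, integral_conv (.of_bound hφ.aestronglyMeasurable C (ae_of_all _ hC))]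
    simp only [integral_fairCoin]
    rw [integral_div, integral_add (h_int _) (h_int _), ih (by fun_prop) fun x ↦ hC _,
      ih (by fun_prop) fun x ↦ hC _, range_add_one, sum_powerset_insert notMem_range_self,
      sum_congr rfl fun S hS ↦ congrArg φ (h_keep S hS)]
    simp only [h_insert]
    ring

lemma exists_signedSum_sub_eq (a : ℕ → ℝ) {S T : Finset ℕ} (hS : S ⊆ range L) (hT : T ⊆ range L)
    (hST : S ≠ T) : ∃ e : ℕ → ℤ, (∀ k, |e k| ≤ 1) ∧ (∃ k < L, e k ≠ 0) ∧
      signedSum a L S - signedSum a L T = 2 * ∑ k ∈ range L, (e k : ℝ) * a k := by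
  refine ⟨fun k ↦ (if k ∈ S then 1 else 0) - (if k ∈ T then 1 else 0), fun k ↦ ?_, ?_, ?_⟩
  · dsimp only
    split_ifs <;> simp
  · obtain ⟨k, hk⟩ : ∃ k, ¬(k ∈ S ↔ k ∈ T) := by simpa [Finset.ext_iff] using hST
    refine ⟨k, ?_, ?_⟩
    · rw [← mem_range]
      by_cases hkS : k ∈ S
      · exact hS hkS
      · exact hT (by tauto)
    · by_cases hkS : k ∈ S <;> by_cases hkT : k ∈ T <;> simp_all
  · rw [signedSum, signedSum, ← sum_sub_distrib, mul_sum]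
    refine sum_congr rfl fun k _ ↦ ?_
    push_cast
    split_ifs <;> ring

lemma integral_integral_signSum_le {g : ℝ → ℝ} {C M : ℝ} (hg : Continuous g) (hC : ∀ x, |g x| ≤ C)
    (hM : 0 ≤ M) (h_sep : ∀ e : ℕ → ℤ, (∀ k, |e k| ≤ 1) → (∃ k < L, e k ≠ 0) →
      g (2 * ∑ k ∈ range L, (e k : ℝ) * a k) ≤ M) :
    ∫ x, ∫ y, g (x - y) ∂signSum a L ∂signSum a L ≤ g 0 / 2 ^ L + M := by
  have h_row (S) (hS : S ∈ (range L).powerset) :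
      ∑ T ∈ (range L).powerset, g (signedSum a L S - signedSum a L T) ≤ g 0 + 2 ^ L * M := by
    rw [← add_sum_erase _ _ hS, sub_self]
    have h_off (T) (hT : T ∈ (range L).powerset.erase S) :
        g (signedSum a L S - signedSum a L T) ≤ M := by
      obtain ⟨hTS, hT⟩ := mem_erase.mp hT
      obtain ⟨e, he, he0, h_eq⟩ :=
        exists_signedSum_sub_eq a (mem_powerset.mp hS) (mem_powerset.mp hT) hTS.symm
      exact h_eq ▸ h_sep e he he0
    have h_card : ((#((range L).powerset.erase S) : ℕ) : ℝ) ≤ 2 ^ L := by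
      exact_mod_cast card_erase_le.trans_eq (by simp)
    gcongr
    refine (sum_le_card_nsmul _ _ M h_off).trans ?_
    rw [nsmul_eq_mul]
    gcongr
  have h_inner (x : ℝ) : ∫ y, g (x - y) ∂signSum a L
      = (∑ T ∈ (range L).powerset, g (x - signedSum a L T)) / 2 ^ L :=
    integral_signSum (by fun_prop) (fun y ↦ hC (x - y)) L
  have h_inner_le (x : ℝ) : |∫ y, g (x - y) ∂signSum a L| ≤ C := by
    simpa using norm_integral_le_of_norm_le_const (μ := signSum a L) (f := fun y ↦ g (x - y))
      (ae_of_all _ fun y ↦ hC (x - y))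
  rw [integral_signSum (by simp only [h_inner]; fun_prop) h_inner_le]
  simp only [h_inner, ← sum_div]
  rw [div_div, div_le_iff₀ (by positivity)]
  calc _ ≤ ∑ _S ∈ (range L).powerset, (g 0 + 2 ^ L * M) := sum_le_sum h_row
    _ = 2 ^ L * (g 0 + 2 ^ L * M) := by simp only [sum_const, card_powerset, card_range,
        nsmul_eq_mul, Nat.cast_pow, Nat.cast_ofNat]
    _ = (g 0 / 2 ^ L + M) * (2 ^ L * 2 ^ L) := by field_simp

end SignSum

section Scaling

variable {ρ : Measure ℝ} {r s : ℝ}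

lemma map_conv_mul_left (r : ℝ) (μ ν : Measure ℝ) [SFinite μ] [SFinite ν] :
    (μ ∗ ν).map (r * ·) = μ.map (r * ·) ∗ ν.map (r * ·) :=
  Measure.map_conv_addMonoidHom (AddMonoidHom.mulLeft r) (measurable_const_mul r)

lemma map_centeredGaussian (r : ℝ) (hs : 0 ≤ s) :
    (centeredGaussian s).map (r * ·) = centeredGaussian (r ^ 2 * s) := by
  rw [centeredGaussian, ProbabilityTheory.gaussianReal_map_const_mul, mul_zero, centeredGaussian]
  congr 1
  ext
  simp [hs, mul_nonneg (sq_nonneg r) hs]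

lemma mollify_map_mul_left (ρ : Measure ℝ) (hr : 0 < r) (s z : ℝ) :
    mollify (ρ.map (r * ·)) (r ^ 2 * s) (r * z) = r⁻¹ * mollify ρ s z := by
  rw [mollify, integral_map (by fun_prop) (by fun_prop), mollify, ← integral_const_mul]
  congr with x
  rw [gaussDensity, gaussDensity, mul_left_comm, sqrt_mul (sq_nonneg r), sqrt_sq hr.le, mul_inv,
    mul_assoc]
  congr 3
  field_simp

lemma negEntropy_map_mul_left [IsProbabilityMeasure ρ] {B : ℝ} (hB : ∀ᵐ x ∂ρ, |x| ≤ B)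
    (hr : 0 < r) (hs : 0 < s) :
    negEntropy (ρ.map (r * ·)) (r ^ 2 * s) = negEntropy ρ s - log r := by
  have : IsProbabilityMeasure (ρ.map (r * ·)) := Measure.isProbabilityMeasure_map (by fun_prop)
  have h_log (z : ℝ) : log (r⁻¹ * mollify ρ s z) = log (mollify ρ s z) - log r := by
    rw [log_mul (by positivity) (mollify_pos hs hB z).ne', log_inv]
    ring
  rw [negEntropy, ← map_centeredGaussian r hs.le, ← map_conv_mul_left, integral_map (by fun_prop)
    (continuous_mollify (by positivity)).measurable.log.aestronglyMeasurable]
  simp only [mollify_map_mul_left ρ hr, h_log]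
  rw [integral_sub (integrable_log_mollify hs hB s) (integrable_const _)]
  simp [negEntropy]

end Scaling

section EntropyBounds

open Finset

variable {ρ : Measure ℝ} [IsProbabilityMeasure ρ] {s B : ℝ}

lemma integrable_mollify_conv_centeredGaussian (hs : 0 < s) :
    Integrable (mollify ρ s) (ρ ∗ centeredGaussian s) :=
  .of_bound (continuous_mollify hs).aestronglyMeasurable (gaussDensity s 0)
    (ae_of_all _ fun z ↦ by simpa [abs_of_nonneg (mollify_nonneg hs z)] using mollify_le hs z)

lemma integral_mollify_conv_centeredGaussian (hs : 0 < s) :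
    ∫ z, mollify ρ s z ∂(ρ ∗ centeredGaussian s)
      = ∫ x, ∫ y, gaussDensity (2 * s) (x - y) ∂ρ ∂ρ := by
  have h_symm (w u : ℝ) : gaussDensity s (w + u) = gaussDensity s (-w - u) := by
    simp only [gaussDensity]
    ring_nf
  rw [integral_conv (integrable_mollify_conv_centeredGaussian hs)]
  congr with x
  simp only [mollify]
  rw [integral_integral_swap (.of_bound (C := gaussDensity s 0) (by fun_prop)
    (ae_of_all _ fun p ↦ abs_gaussDensity_le hs _))]
  congr with y
  simp only [add_sub_right_comm, h_symm]
  rw [← mollify, mollify_centeredGaussian hs hs, ← two_mul, gaussDensity, gaussDensity, neg_sq]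

/-- Jensen's inequality `∫ f log f ≤ log ∫ f²`. -/
lemma negEntropy_le_log (hB : ∀ᵐ x ∂ρ, |x| ≤ B) (hs : 0 < s) {I : ℝ} (hI : 0 < I)
    (h : ∫ x, ∫ y, gaussDensity (2 * s) (x - y) ∂ρ ∂ρ ≤ I) : negEntropy ρ s ≤ log I := by
  have h_int := integrable_mollify_conv_centeredGaussian (ρ := ρ) hs
  calc negEntropy ρ s
      ≤ ∫ z, (mollify ρ s z / I + (log I - 1)) ∂(ρ ∗ centeredGaussian s) := by
        refine integral_mono (integrable_log_mollify hs hB s)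
          ((h_int.div_const I).add (integrable_const _)) fun z ↦ ?_
        have h_pos := mollify_pos hs hB z
        have h_log := log_le_sub_one_of_pos (div_pos h_pos hI)
        rw [log_div h_pos.ne' hI.ne'] at h_log
        dsimp only
        linarith
    _ = (∫ x, ∫ y, gaussDensity (2 * s) (x - y) ∂ρ ∂ρ) / I + (log I - 1) := by
        rw [integral_add (h_int.div_const I) (integrable_const _), integral_div,
          integral_mollify_conv_centeredGaussian hs]
        simp
    _ ≤ log I := by linarith [(div_le_one hI).mpr h]

lemma log_gaussDensity_zero_le (hs : 0 < s) : log (gaussDensity (2 * s) 0) ≤ -log s / 2 := by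
  have h_log : log s ≤ log (2 * π * (2 * s)) := log_le_log hs (by nlinarith [pi_gt_three])
  rw [gaussDensity, zero_pow two_ne_zero, neg_zero, zero_div, exp_zero, mul_one, log_inv,
    log_sqrt (by positivity)]
  linarith

lemma gaussDensity_le_of_le_abs {δ x : ℝ} {L : ℕ} (hδ : 0 < δ) (hL : L ≠ 0) (hx : δ ≤ |x|) :
    gaussDensity (2 * (δ ^ 2 / L)) (2 * x) ≤ gaussDensity (2 * (δ ^ 2 / L)) 0 / 2 ^ L := by
  have hL0 : (0 : ℝ) < L := by positivity
  rw [gaussDensity_eq_zero_mul_exp, div_eq_mul_inv]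
  refine mul_le_mul_of_nonneg_left ?_ (gaussDensity_pos (by positivity) 0).le
  have h_sq : δ ^ 2 ≤ x ^ 2 := by
    rw [← sq_abs x]
    gcongr
  calc exp (-(2 * x) ^ 2 / (2 * (2 * (δ ^ 2 / L)))) = exp (-(L * (x ^ 2 / δ ^ 2))) := by
        congr 1
        field_simp
    _ ≤ exp (-L) := by
        gcongr
        exact le_mul_of_one_le_right hL0.le ((one_le_div (by positivity)).mpr h_sq)
    _ = (exp 1 ^ L)⁻¹ := by rw [exp_neg, ← exp_nat_mul, mul_one]
    _ ≤ (2 ^ L)⁻¹ := by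
        gcongr
        linarith [add_one_le_exp (1 : ℝ)]

/-- Distinct signed sums are `2 * δ`-separated, so the self-convolution of `signSum a L` at scale
`δ` is dominated by the diagonal, which has mass `2⁻¹ ^ L`. -/
lemma negEntropy_signSum_le {a : ℕ → ℝ} {L : ℕ} {δ : ℝ} (hδ : 0 < δ) (hL : L ≠ 0)
    (h_sep : ∀ e : ℕ → ℤ, (∀ k, |e k| ≤ 1) → (∃ k < L, e k ≠ 0) →
      δ ≤ |∑ k ∈ range L, (e k : ℝ) * a k|) :
    negEntropy (signSum a L) (δ ^ 2 / L) ≤ log 2 - L * log 2 + log L / 2 - log δ := by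
  have hL0 : (0 : ℝ) < L := by positivity
  have hs : 0 < δ ^ 2 / L := by positivity
  have hη := gaussDensity_pos (by positivity : 0 < 2 * (δ ^ 2 / L)) 0
  have h_collision := integral_integral_signSum_le (continuous_gaussDensity _)
    (abs_gaussDensity_le (by positivity)) (by positivity)
    fun e he he0 ↦ gaussDensity_le_of_le_abs hδ hL (h_sep e he he0)
  refine (negEntropy_le_log (ae_abs_signSum_le a L) hs (by positivity) h_collision).trans ?_
  have h_log := log_gaussDensity_zero_le hs
  rw [log_div (by positivity) hL0.ne', log_pow] at h_log
  rw [← two_mul, mul_div_assoc', log_div (by positivity) (by positivity), log_pow,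
    log_mul two_ne_zero hη.ne']
  push_cast at h_log
  linarith

end EntropyBounds

section GoodScales

open Finset

variable {x β c : ℝ} {L : ℕ}

lemma exists_sub_succ_le_div (u : ℕ → ℝ) {N : ℕ} (hN : N ≠ 0) :
    ∃ i < N, u i - u (i + 1) ≤ (u 0 - u N) / N := by
  have h_sum : ∑ i ∈ range N, (u i - u (i + 1)) ≤ ∑ _i ∈ range N, (u 0 - u N) / N := by
    rw [sum_range_sub', sum_const, card_range, nsmul_eq_mul, mul_div_cancel₀ _ (by positivity)]
  obtain ⟨i, hi, h⟩ := exists_le_of_sum_le (nonempty_range_iff.mpr hN) h_sum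
  exact ⟨i, mem_range.mp hi, h⟩

lemma eventually_mul_add_log_add_le (C : ℝ) : ∀ᶠ L : ℕ in Filter.atTop,
    (L : ℝ) * 0.0005 + log L / 2 + C ≤ (L / 6 : ℕ) / 144 := by
  have h_log := (isLittleO_log_id_atTop.comp_tendsto tendsto_natCast_atTop_atTop).bound
    (by norm_num : (0 : ℝ) < 0.0005)
  filter_upwards [h_log, tendsto_natCast_atTop_atTop.eventually_ge_atTop ((C + 1) / 0.0002)]
    with L h_log h_large
  simp only [Function.comp_apply, id, norm_eq_abs, Nat.abs_cast] at h_log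
  rw [div_le_iff₀ (by norm_num)] at h_large
  have h_floor : (L : ℝ) ≤ 6 * (L / 6 : ℕ) + 5 := by
    exact_mod_cast (by lia : L ≤ 6 * (L / 6) + 5)
  linarith [le_abs_self (log (L : ℝ))]

lemma exists_pow_mem_Ioc {q y : ℝ} (hq : 1 < q) (hy : 1 ≤ y) :
    ∃ n : ℕ, y < q ^ n ∧ q ^ n ≤ q * y := by
  obtain ⟨n, hn, hn'⟩ := exists_nat_pow_near hy hq
  exact ⟨n + 1, hn', by rw [pow_succ']; gcongr⟩

lemma exists_lacunary_scales {q v W : ℝ} (hq : 1 < q) (hq2 : q ≤ 3 / 2) (hv : 0 < v) (hvW : v ≤ W) :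
    ∃ d : ℕ → ℕ, W ≤ v * q ^ d 0 ∧ (∀ i, 5 * (v * q ^ d i) ≤ v * q ^ d (i + 1)) ∧
      ∀ i, v * q ^ d i ≤ 3 / 2 * W * 8 ^ i := by
  obtain ⟨b, hb, hb'⟩ := exists_pow_mem_Ioc hq ((one_le_div hv).mpr hvW)
  obtain ⟨p, hp, hp'⟩ := exists_pow_mem_Ioc hq (by norm_num : (1 : ℝ) ≤ 5)
  have hq0 : 0 < q := by linarith
  have hW : 0 < W := hv.trans_le hvW
  rw [div_lt_iff₀' hv] at hb
  rw [← mul_div_assoc, le_div_iff₀' hv] at hb'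
  refine ⟨fun i ↦ b + p * i, hb.le, fun i ↦ ?_, fun i ↦ ?_⟩
  · calc 5 * (v * q ^ (b + p * i)) ≤ q ^ p * (v * q ^ (b + p * i)) := by gcongr
      _ = v * q ^ (b + p * (i + 1)) := by ring
  · calc v * q ^ (b + p * i) = v * q ^ b * (q ^ p) ^ i := by ring
      _ ≤ 3 / 2 * W * 8 ^ i :=
        mul_le_mul (hb'.trans (by gcongr)) (pow_le_pow_left₀ (by positivity) (by linarith) i)
          (by positivity) (by positivity)

/-- `HasGoodScales x β L` says that every variance `v ≤ β ^ (-2 * L)` is, up to rescaling by a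
power of `x`, a variance `w ≤ x ^ (2 * L) * β ^ (-L)` around which the entropy of the Gaussian
mollification of `∑ k < L, ± x ^ k` is almost constant. -/
def HasGoodScales (x β : ℝ) (L : ℕ) : Prop :=
  ∀ v, 0 < v → v ≤ (β ^ (2 * L))⁻¹ → ∃ (b : ℕ) (w : ℝ), 0 < w ∧ v = (x ^ b) ^ 2 * w ∧
    w ≤ (x ^ L) ^ 2 * (β ^ L)⁻¹ ∧
    negEntropy (signSum (x ^ ·) L) (w / 4) - negEntropy (signSum (x ^ ·) L) (5 * w / 4) ≤ 1 / 144

lemma ae_abs_signSum_pow_le (hx0 : 0 ≤ x) (hx1 : x < 1) (L : ℕ) :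
    ∀ᵐ y ∂signSum (x ^ ·) L, |y| ≤ (1 - x)⁻¹ := by
  filter_upwards [ae_abs_signSum_le (x ^ ·) L] with y hy
  simp only [abs_pow, abs_of_nonneg hx0] at hy
  rw [← tsum_geometric_of_lt_one hx0 hx1]
  exact hy.trans ((summable_geometric_of_lt_one hx0 hx1).sum_le_tsum _ fun k _ ↦ by positivity)

lemma le_pow_mul_inv_pow_of_le (hβ : 2 ≤ β) (hx : 1 / 2 ≤ x ^ 4) {w : ℝ} {i : ℕ} (hw : 0 ≤ w)
    (hi : 6 * i + 2 ≤ L) (h : w ≤ 3 / 2 * (β ^ (2 * L))⁻¹ * 8 ^ i) :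
    w ≤ (x ^ L) ^ 2 * (β ^ L)⁻¹ := by
  refine (sq_le_sq₀ hw (by positivity)).mp ?_
  have h_small : (3 / 2 * 8 ^ i : ℝ) ^ 2 ≤ β ^ L := by
    calc (3 / 2 * 8 ^ i : ℝ) ^ 2 ≤ 2 ^ 2 * (8 ^ i) ^ 2 := by rw [mul_pow]; gcongr; norm_num
      _ = 2 ^ (6 * i + 2) := by
        rw [show (8 : ℝ) = 2 ^ 3 by norm_num, ← pow_mul, ← pow_mul]
        ring
      _ ≤ β ^ (6 * i + 2) := by gcongr
      _ ≤ β ^ L := pow_le_pow_right₀ (by linarith) hi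
  have h_x : (β ^ L)⁻¹ ≤ (x ^ 4) ^ L := by
    rw [← inv_pow]
    gcongr
    exact (inv_anti₀ two_pos hβ).trans (by linarith)
  calc w ^ 2 ≤ (3 / 2 * (β ^ (2 * L))⁻¹ * 8 ^ i) ^ 2 := by gcongr
    _ = (3 / 2 * 8 ^ i) ^ 2 * (β ^ L)⁻¹ ^ 4 := by rw [mul_comm 2 L, pow_mul]; ring
    _ ≤ β ^ L * (β ^ L)⁻¹ ^ 4 := by gcongr
    _ = (β ^ L)⁻¹ * (β ^ L)⁻¹ ^ 2 := by field_simp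
    _ ≤ (x ^ 4) ^ L * (β ^ L)⁻¹ ^ 2 := by gcongr
    _ = ((x ^ L) ^ 2 * (β ^ L)⁻¹) ^ 2 := by ring

lemma le_four_of_le (hβ : 2 ≤ β) {w : ℝ} (h : w ≤ 3 / 2 * (β ^ (2 * L))⁻¹ * 8 ^ (L / 6)) :
    w ≤ 4 := by
  have h8 : (8 : ℝ) ^ (L / 6) ≤ 2 ^ (2 * L) := by
    rw [show (8 : ℝ) = 2 ^ 3 by norm_num, ← pow_mul]
    exact pow_le_pow_right₀ one_le_two (by lia)
  calc w ≤ 3 / 2 * (2 ^ (2 * L))⁻¹ * 2 ^ (2 * L) := h.trans (by gcongr)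
    _ ≤ 4 := by rw [mul_assoc, inv_mul_cancel₀ (by positivity)]; norm_num

lemma IsSeparated.negEntropy_signSum_le (h : IsSeparated x β c) (hc : 0 < c) (hβ : 0 < β)
    (hL : L ≠ 0) : negEntropy (signSum (x ^ ·) L) ((c / β ^ L) ^ 2 / L)
      ≤ L * log (β / 2) + log L / 2 + (log 2 - log c) := by
  refine (_root_.negEntropy_signSum_le (by positivity) hL (h L)).trans_eq ?_
  rw [log_div hc.ne' (by positivity), log_pow, log_div hβ.ne' two_ne_zero]
  ring

lemma IsSeparated.negEntropy_sub_le (h : IsSeparated x β c) (hc : 0 < c) (hβ : 0 < β)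
    (hx0 : 0 ≤ x) (hx1 : x < 1) (hL : L ≠ 0) (hcL : 4 * c ^ 2 ≤ L) {w w' : ℝ}
    (hw : (β ^ (2 * L))⁻¹ ≤ w) (hw' : 0 < w') (hw4 : w' ≤ 4) :
    negEntropy (signSum (x ^ ·) L) (w / 4) - negEntropy (signSum (x ^ ·) L) (w' / 4)
      ≤ L * log (β / 2) + log L / 2 + (log 2 - log c) - (log (gaussDensity 1 0)
        - (∫ u, (|u| + 2 * (1 - x)⁻¹) ^ 2 ∂centeredGaussian 1) / 2) := by
  have hB := ae_abs_signSum_pow_le hx0 hx1 L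
  have h_scale : (c / β ^ L) ^ 2 / L ≤ w / 4 := by
    calc (c / β ^ L) ^ 2 / L = c ^ 2 / L * (β ^ (2 * L))⁻¹ := by rw [mul_comm 2 L]; ring
      _ ≤ 1 / 4 * (β ^ (2 * L))⁻¹ := by
        gcongr ?_ * _
        rw [div_le_div_iff₀ (by positivity) (by norm_num)]
        linarith
      _ ≤ w / 4 := by linarith
  have h_upper := (negEntropy_antitone (by positivity) h_scale hB).trans
    (h.negEntropy_signSum_le hc hβ hL)
  have h_lower := (le_negEntropy_one hB).trans
    (negEntropy_antitone (by positivity) (by linarith : w' / 4 ≤ 1) hB)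
  linarith

lemma exists_negEntropy_drop_le {ρ : Measure ℝ} [IsProbabilityMeasure ρ] {B : ℝ}
    (hB : ∀ᵐ y ∂ρ, |y| ≤ B) {w : ℕ → ℝ} (hw0 : ∀ i, 0 < w i) (hw : ∀ i, 5 * w i ≤ w (i + 1)) {N : ℕ}
    (hN : N ≠ 0) : ∃ i < N, negEntropy ρ (w i / 4) - negEntropy ρ (5 * w i / 4)
      ≤ (negEntropy ρ (w 0 / 4) - negEntropy ρ (w N / 4)) / N := by
  obtain ⟨i, hi, h⟩ := exists_sub_succ_le_div (fun i ↦ negEntropy ρ (w i / 4)) hN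
  refine ⟨i, hi, h.trans' (sub_le_sub_left ?_ _)⟩
  exact negEntropy_antitone (by linarith [hw0 i]) (by linarith [hw i]) hB

theorem IsSeparated.eventually_hasGoodScales (h : IsSeparated x β c) (hc : 0 < c) (hβ : 2 ≤ β)
    (hβ' : β ≤ 2.001) (hx0 : 0 < x) (hx1 : x < 1) (hx : 1 / 2 ≤ x ^ 4) :
    ∀ᶠ L in Filter.atTop, HasGoodScales x β L := by
  have hq : 1 < (x ^ 2)⁻¹ := (one_lt_inv₀ (by positivity)).mpr (pow_lt_one₀ hx0.le hx1 two_ne_zero)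
  have hq' : (x ^ 2)⁻¹ ≤ 3 / 2 := inv_le_of_inv_le₀ (by norm_num) (by nlinarith)
  filter_upwards [Filter.eventually_ge_atTop 6,
    tendsto_natCast_atTop_atTop.eventually_ge_atTop (4 * c ^ 2),
    eventually_mul_add_log_add_le (log 2 - log c - (log (gaussDensity 1 0)
      - (∫ u, (|u| + 2 * (1 - x)⁻¹) ^ 2 ∂centeredGaussian 1) / 2))] with L hL hcL h_budget v hv hvβ
  obtain ⟨d, hd0, hd5, hd8⟩ := exists_lacunary_scales hq hq' hv hvβ
  have hd_pos (i : ℕ) : 0 < v * (x ^ 2)⁻¹ ^ d i := by positivity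
  obtain ⟨i, hi, h_drop⟩ := exists_negEntropy_drop_le (ae_abs_signSum_pow_le hx0.le hx1 L)
    hd_pos hd5 (by lia : L / 6 ≠ 0)
  refine ⟨d i, v * (x ^ 2)⁻¹ ^ d i, hd_pos i, ?_, ?_, h_drop.trans ?_⟩
  · rw [mul_left_comm, ← pow_mul, mul_comm (d i), pow_mul, ← mul_pow,
      mul_inv_cancel₀ (by positivity), one_pow, mul_one]
  · exact le_pow_mul_inv_pow_of_le hβ hx (hd_pos i).le (by lia) (hd8 i)
  have h_log : log (β / 2) ≤ 0.0005 :=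
    (log_le_sub_one_of_pos (by linarith)).trans (by linarith)
  have h_total := h.negEntropy_sub_le hc (by linarith) hx0.le hx1 (by lia) hcL hd0
    (hd_pos (L / 6)) (le_four_of_le hβ (hd8 _))
  have h_mul : L * log (β / 2) ≤ L * 0.0005 := by gcongr
  have hN : (0 : ℝ) < (L / 6 : ℕ) := by exact_mod_cast (by lia : 0 < L / 6)
  rw [div_le_iff₀ hN]
  linarith

end GoodScales

section Semigroup

/-! ### Contraction semigroups and damping -/

/-- A one-parameter contraction semigroup `H` in a normed ring, defined for positive times, with the
regularity of the heat semigroup: `H s` and `H (s + t)` are within `t / s`. -/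
structure IsHeatLike {A : Type*} [NormedRing A] (H : ℝ → A) : Prop where
  mul_eq : ∀ ⦃s t⦄, 0 < s → 0 < t → H s * H t = H (s + t)
  norm_le_one : ∀ ⦃s⦄, 0 < s → ‖H s‖ ≤ 1
  norm_mul_one_sub_le : ∀ ⦃s t⦄, 0 < s → 0 < t → 4 * t ≤ s → ‖H s * (1 - H t)‖ ≤ t / s

/-- `T` improves, by a factor `1 / 6` per difference, the bound `(t / s) ^ k` that holds for
`k`-fold differences of a heat-like semigroup, as long as `s ≤ M`. -/
def Damps {A : Type*} [NormedRing A] (H : ℝ → A) (T : A) (k : ℕ) (M : ℝ) : Prop :=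
  ∀ ⦃s t⦄, 0 < s → 0 < t → 4 * t ≤ s → s ≤ M → ‖T * (H s * (1 - H t)) ^ k‖ ≤ (t / (6 * s)) ^ k

variable {A : Type*} [NormedRing A] {H : ℝ → A} {T : A} {s t : ℝ} {k : ℕ}

namespace IsHeatLike

lemma commute (hH : IsHeatLike H) (hs : 0 < s) (ht : 0 < t) : Commute (H s) (1 - H t) :=
  (Commute.one_right _).sub_right (by
    rw [Commute, SemiconjBy, hH.mul_eq hs ht, hH.mul_eq ht hs, add_comm])

lemma pow_succ_eq (hH : IsHeatLike H) (hs : 0 < s) (i : ℕ) : H s ^ (i + 1) = H ((i + 1) * s) := by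
  induction i with
  | zero => simp
  | succ i ih =>
    rw [pow_succ, ih, hH.mul_eq (by positivity) hs]
    congr 1
    push_cast
    ring

lemma mul_one_sub_pow (hH : IsHeatLike H) (hs : 0 < s) (ht : 0 < t) {i : ℕ} (hi : 1 ≤ i) :
    H s * (1 - H t) ^ i = (H (s / i) * (1 - H t)) ^ i := by
  obtain ⟨j, rfl⟩ := Nat.exists_eq_add_of_le' hi
  rw [(hH.commute (by positivity) ht).mul_pow, hH.pow_succ_eq (by positivity)]
  congr 2
  push_cast
  field_simp

lemma norm_mul_one_sub_pow_le (hH : IsHeatLike H) (hs : 0 < s) (ht : 0 < t) {i : ℕ} (hi : 1 ≤ i)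
    (hts : 4 * (i * t) ≤ s) : ‖H s * (1 - H t) ^ i‖ ≤ (i * t / s) ^ i := by
  have hi0 : (0 : ℝ) < i := by exact_mod_cast hi
  rw [hH.mul_one_sub_pow hs ht hi]
  refine (norm_pow_le' _ hi).trans (pow_le_pow_left₀ (norm_nonneg _) ?_ i)
  refine (hH.norm_mul_one_sub_le (by positivity) ht ?_).trans_eq (by field_simp)
  rw [le_div_iff₀ hi0]
  linarith

lemma norm_mul_sub_le (hH : IsHeatLike H) (hs : 0 < s) (ht : 0 < t) {D : ℝ}
    (h : ‖T * (H s * (1 - H t))‖ ≤ D) (j : ℕ) : ‖T * (H s - H (s + j * t))‖ ≤ j * D := by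
  induction j with
  | zero => simp
  | succ j ih =>
    have h_split : T * (H s - H (s + (j + 1 : ℕ) * t))
        = T * (H s * (1 - H t)) + T * (H s - H (s + j * t)) * H t := by
      have h_next : H (s + j * t) * H t = H (s + (j + 1 : ℕ) * t) := by
        rw [hH.mul_eq (by positivity) ht]
        congr 1
        push_cast
        ring
      rw [← h_next]
      noncomm_ring
    calc ‖T * (H s - H (s + (j + 1 : ℕ) * t))‖
        ≤ ‖T * (H s * (1 - H t))‖ + ‖T * (H s - H (s + j * t))‖ * ‖H t‖ := by
          rw [h_split]
          exact (norm_add_le _ _).trans (by gcongr; exact norm_mul_le _ _)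
      _ ≤ D + j * D * 1 := by
          gcongr
          · exact (norm_nonneg _).trans ih
          · exact hH.norm_le_one ht
      _ = (j + 1 : ℕ) * D := by push_cast; ring

/-- Expanding `1 = H t + (1 - H t)` trades a difference for a larger time, so the norms of
`T * H ((m + 4 * k) * t) * (1 - H t) ^ i` satisfy the transport inequality. -/
lemma norm_mul_mul_one_sub_le (hH : IsHeatLike H) (hT : ‖T‖ ≤ 1) (hk : 1 ≤ k) {R : ℕ} (hR : 1 ≤ R)
    {M : ℝ} (h : Damps H T k M) (ht : 0 < t) (hM : (R + 4 * k) * t / k ≤ M) :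
    ‖T * (H (4 * k * t) * (1 - H t))‖ ≤ (exp 1 * (1 / 6)) ^ k / 3 + (k : ℝ) ^ (k + 1) / R := by
  have hk0 : (0 : ℝ) < k := by exact_mod_cast hk
  have h_main := le_of_transport (D := fun i m ↦ ‖T * (H ((m + 4 * k) * t) * (1 - H t) ^ i)‖)
    hk hR (by norm_num : (0 : ℝ) ≤ 1 / 6) ?_ ?_ ?_
  · simpa using h_main
  · intro i m
    have h_next : H ((m + 4 * k) * t) * H t = H (((m + 1 : ℕ) + 4 * k) * t) := by
      rw [hH.mul_eq (by positivity) ht]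
      congr 1
      push_cast
      ring
    have h_split : T * (H ((m + 4 * k) * t) * (1 - H t) ^ i)
        = T * (H ((m + 4 * k) * t) * (1 - H t) ^ (i + 1))
          + T * (H (((m + 1 : ℕ) + 4 * k) * t) * (1 - H t) ^ i) := by
      rw [← h_next, pow_succ']
      noncomm_ring
    exact (congrArg norm h_split).trans_le (norm_add_le _ _)
  · intro m hm
    have hm' : (m : ℝ) ≤ R := by exact_mod_cast hm
    have h_le : ((m : ℝ) + 4 * k) * t / k ≤ M := hM.trans' (by gcongr)
    simp only [hH.mul_one_sub_pow (by positivity : 0 < ((m : ℝ) + 4 * k) * t) ht hk]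
    refine (h (by positivity) ht ?_ h_le).trans_eq (by field_simp)
    rw [le_div_iff₀ hk0]
    nlinarith [m.cast_nonneg (α := ℝ)]
  · intro i hi hik
    have hik' : (i : ℝ) ≤ k := by exact_mod_cast hik
    calc ‖T * (H ((R + 4 * k) * t) * (1 - H t) ^ i)‖
        ≤ 1 * ‖H ((R + 4 * k) * t) * (1 - H t) ^ i‖ := (norm_mul_le _ _).trans (by gcongr)
      _ ≤ 1 * (i * t / ((R + 4 * k) * t)) ^ i := by
        gcongr
        exact hH.norm_mul_one_sub_pow_le (by positivity) ht hi
          (by nlinarith [R.cast_nonneg (α := ℝ)])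
      _ ≤ (k / R) ^ i := by
        rw [one_mul, mul_div_mul_right _ _ ht.ne']
        gcongr
        linarith

lemma norm_mul_sub_two_mul_le (hH : IsHeatLike H) (hT : ‖T‖ ≤ 1) (hk : 1 ≤ k) {b : ℝ}
    (hb : 2 ^ 2 ^ k ≤ b) (h : Damps H T k b⁻¹) (ht : 0 < t) (htb : t ≤ (b ^ 2)⁻¹) :
    ‖T * (H t - H (2 * t))‖
      ≤ 4 * k * ((exp 1 * (1 / 6)) ^ k / 3 + (k : ℝ) ^ (k + 1) / 2 ^ 2 ^ k) := by
  have hk1 : (1 : ℝ) ≤ k := by exact_mod_cast hk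
  have hb0 : 0 < b := hb.trans_lt' (by positivity)
  have hR : (2 : ℝ) ≤ 2 ^ 2 ^ k := le_self_pow₀ one_le_two (by positivity)
  have hM : ((2 ^ 2 ^ k : ℕ) + 4 * k) * (t / (4 * k)) / k ≤ b⁻¹ := by
    calc ((2 ^ 2 ^ k : ℕ) + 4 * k) * (t / (4 * k)) / k
        = (2 ^ 2 ^ k / (4 * k ^ 2) + 1 / k) * t := by push_cast; field_simp
      _ ≤ (2 ^ 2 ^ k / 4 + 1) * t := by
        gcongr
        · nlinarith
        · exact (div_le_one (by linarith)).mpr hk1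
      _ ≤ b * (b ^ 2)⁻¹ := by gcongr; linarith
      _ = b⁻¹ := by field_simp
  have h_diff := hH.norm_mul_mul_one_sub_le hT hk Nat.one_le_two_pow h
    (by positivity : 0 < t / (4 * k)) hM
  rw [show 4 * k * (t / (4 * k)) = t by field_simp] at h_diff
  have h_sum := hH.norm_mul_sub_le ht (by positivity : 0 < t / (4 * k)) h_diff (4 * k)
  push_cast at h_sum
  rwa [show t + 4 * k * (t / (4 * k)) = 2 * t by field_simp; ring] at h_sum

end IsHeatLike

lemma sq_add_four_mul_le_two_pow (hk : 7 ≤ k) : k ^ 2 + 4 * k ≤ 2 ^ k := by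
  induction k, hk using Nat.le_induction with
  | base => norm_num
  | succ k hk ih =>
    rw [pow_succ 2 k]
    nlinarith

lemma two_pow_mul_pow_div_two_pow_two_pow_le (hk : 7 ≤ k) :
    (2 : ℝ) ^ k * (k * (k : ℝ) ^ (k + 1)) / 2 ^ 2 ^ k ≤ (1 / 2) ^ k := by
  have h_lt : (k : ℝ) ≤ 2 ^ k := by exact_mod_cast Nat.lt_two_pow_self.le
  rw [div_le_iff₀ (by positivity), one_div, inv_pow, inv_mul_eq_div, le_div_iff₀ (by positivity)]
  calc (2 : ℝ) ^ k * (k * (k : ℝ) ^ (k + 1)) * 2 ^ k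
      ≤ (2 : ℝ) ^ k * (2 ^ k * (2 ^ k) ^ (k + 1)) * 2 ^ k := by gcongr
    _ = 2 ^ (k ^ 2 + 4 * k) := by
        rw [← pow_mul, ← pow_add, ← pow_add, ← pow_add]
        congr 1
        ring
    _ ≤ 2 ^ 2 ^ k := pow_le_pow_right₀ one_le_two (sq_add_four_mul_le_two_pow hk)

lemma summable_two_pow_mul_bound : Summable fun k : ℕ ↦
    (2 : ℝ) ^ k * (4 * k * ((exp 1 * (1 / 6)) ^ k / 3 + (k : ℝ) ^ (k + 1) / 2 ^ 2 ^ k)) := by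
  have h_exp : ‖exp 1 / 3‖ < 1 := by
    rw [norm_of_nonneg (by positivity), div_lt_one (by norm_num)]
    linarith [exp_one_lt_d9]
  have h_first := (summable_pow_mul_geometric_of_norm_lt_one 1 h_exp).mul_left (4 / 3)
  have h_second : Summable fun k : ℕ ↦
      (2 : ℝ) ^ k * (k * (k : ℝ) ^ (k + 1)) / 2 ^ 2 ^ k := by
    refine Summable.of_norm_bounded_eventually_nat summable_geometric_two ?_
    filter_upwards [Filter.eventually_ge_atTop 7] with k hk
    rw [norm_of_nonneg (by positivity)]
    exact two_pow_mul_pow_div_two_pow_two_pow_le hk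
  refine (h_first.add (h_second.mul_left 4)).congr fun k ↦ ?_
  rw [show exp 1 / 3 = 2 * (exp 1 * (1 / 6)) by ring, mul_pow 2 (exp 1 * (1 / 6)) k]
  ring

lemma cauchySeq_comp_two_pow_mul {α : Type*} [PseudoMetricSpace α] {u : ℕ → α} {b : ℕ → ℝ}
    {p q : ℕ} (hb : ∀ k j, 1 ≤ k → 2 ^ (k + p) * q ≤ j → dist (u j) (u (j + 1)) ≤ b k)
    (hs : Summable fun k ↦ 2 ^ k * b k) : CauchySeq fun i ↦ u (2 ^ i * q) := by
  have hs' : Summable fun i ↦ (2 : ℝ) ^ p * q * (2 ^ (i + 1) * b (i + 1)) :=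
    ((summable_nat_add_iff 1).mpr hs).mul_left _
  refine (cauchySeq_shift (1 + p)).mp (cauchySeq_of_dist_le_of_summable _ (fun i ↦ ?_) hs')
  rw [← add_assoc, ← add_assoc]
  have h_double : 2 ^ (i + 1 + 1 + p) * q = 2 ^ (i + 1 + p) * q + 2 ^ (i + 1 + p) * q := by ring
  have h_dist := dist_le_Ico_sum_of_dist_le (f := u) (d := fun _ ↦ b (i + 1))
    (by lia : 2 ^ (i + 1 + p) * q ≤ 2 ^ (i + 1 + 1 + p) * q) fun hj _ ↦ hb (i + 1) _ (by lia) hj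
  refine h_dist.trans_eq ?_
  rw [Finset.sum_const, Nat.card_Ico, h_double, Nat.add_sub_cancel, nsmul_eq_mul]
  push_cast
  ring

theorem IsHeatLike.cauchySeq (hH : IsHeatLike H) (hT : ‖T‖ ≤ 1) {β : ℝ} (hβ : 2 ≤ β) (hβ' : β ≤ 4)
    {L : ℕ} (hL : 1 ≤ L) (h : ∀ k, Damps H T k (β ^ (2 ^ k * L))⁻¹) :
    CauchySeq fun i : ℕ ↦ T * H ((1 / 2) ^ (2 ^ i * L)) := by
  refine cauchySeq_comp_two_pow_mul (u := fun j ↦ T * H ((1 / 2) ^ j)) (p := 2)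
    (fun k j hk hj ↦ ?_) summable_two_pow_mul_bound
  have hb : (2 : ℝ) ^ 2 ^ k ≤ β ^ (2 ^ k * L) :=
    (pow_le_pow_left₀ zero_le_two hβ _).trans
      (pow_le_pow_right₀ (by linarith) (Nat.le_mul_of_pos_right _ hL))
  have h_time : (1 / 2 : ℝ) ^ (j + 1) ≤ ((β ^ (2 ^ k * L)) ^ 2)⁻¹ := by
    rw [one_div, inv_pow]
    gcongr
    calc (β ^ (2 ^ k * L)) ^ 2 ≤ ((2 ^ 2) ^ (2 ^ k * L)) ^ 2 := by
          gcongr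
          linarith
      _ = 2 ^ (2 ^ (k + 2) * L) := by
          rw [← pow_mul, ← pow_mul]
          congr 1
          ring
      _ ≤ 2 ^ (j + 1) := pow_le_pow_right₀ one_le_two (by lia)
  have h_step := hH.norm_mul_sub_two_mul_le hT hk hb (h k) (by positivity) h_time
  rw [show 2 * (1 / 2 : ℝ) ^ (j + 1) = (1 / 2) ^ j by rw [pow_succ]; ring, mul_sub] at h_step
  rwa [dist_comm, dist_eq_norm]

end Semigroup

section ConvolutionOperators

/-! ### Convolution operators and self-similar measures -/

open scoped BoundedContinuousFunction

variable {M : Type*} [AddCommMonoid M] [TopologicalSpace M] [ContinuousAdd M]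

/-- The translate `x ↦ φ (y + x)` of a bounded continuous function. -/
def translateLeft (φ : M →ᵇ ℝ) (y : M) : M →ᵇ ℝ :=
  φ.compContinuous ⟨(y + ·), by fun_prop⟩

lemma translateLeft_apply (φ : M →ᵇ ℝ) (y x : M) : translateLeft φ y x = φ (y + x) := rfl

lemma norm_translateLeft_le (φ : M →ᵇ ℝ) (y : M) : ‖translateLeft φ y‖ ≤ ‖φ‖ :=
  φ.norm_compContinuous_le _

variable [MeasurableSpace M] [BorelSpace M]

lemma norm_integral_translateLeft_le (ν : Measure M) [IsProbabilityMeasure ν] (φ : M →ᵇ ℝ) (y : M) :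
    ‖∫ x, translateLeft φ y x ∂ν‖ ≤ ‖φ‖ :=
  ((translateLeft φ y).norm_integral_le_norm ν).trans (norm_translateLeft_le φ y)

variable [SecondCountableTopology M] {μ ν ρ : Measure M}
  [IsProbabilityMeasure μ] [IsProbabilityMeasure ν] [IsProbabilityMeasure ρ]

lemma continuous_integral_translateLeft (ν : Measure M) [IsFiniteMeasure ν] (φ : M →ᵇ ℝ) :
    Continuous fun y ↦ ∫ x, translateLeft φ y x ∂ν :=
  continuous_of_dominated (fun y ↦ (translateLeft φ y).continuous.aestronglyMeasurable)
    (fun _ ↦ ae_of_all _ fun _ ↦ φ.norm_coe_le_norm _) (integrable_const _)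
    (ae_of_all _ fun x ↦ φ.continuous.comp (continuous_add_const x))

/-- The operator `φ ↦ (y ↦ ∫ φ (y + x) dν)` on bounded continuous functions. -/
noncomputable def convOp (ν : Measure M) [IsProbabilityMeasure ν] : (M →ᵇ ℝ) →L[ℝ] (M →ᵇ ℝ) :=
  LinearMap.mkContinuous
    { toFun φ := .ofNormedAddCommGroup (fun y ↦ ∫ x, translateLeft φ y x ∂ν)
        (continuous_integral_translateLeft ν φ) ‖φ‖ (norm_integral_translateLeft_le ν φ)
      map_add' φ ψ := by
        ext y
        exact integral_add ((translateLeft φ y).integrable ν) ((translateLeft ψ y).integrable ν)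
      map_smul' c φ := by
        ext y
        exact integral_const_mul c _ } 1
    fun φ ↦ (BoundedContinuousFunction.norm_ofNormedAddCommGroup_le _ (norm_nonneg φ)
      (norm_integral_translateLeft_le ν φ)).trans_eq (one_mul _).symm

lemma convOp_apply (φ : M →ᵇ ℝ) (y : M) : convOp ν φ y = ∫ x, translateLeft φ y x ∂ν := rfl

lemma convOp_apply_zero (φ : M →ᵇ ℝ) : convOp ν φ 0 = ∫ x, φ x ∂ν := by
  simp only [convOp_apply, translateLeft_apply, zero_add]

lemma norm_convOp_le_one : ‖convOp ν‖ ≤ 1 :=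
  LinearMap.mkContinuous_norm_le _ zero_le_one _

lemma convOp_eq_mul (h : μ = ν ∗ ρ) : convOp μ = convOp ν * convOp ρ := by
  subst h
  ext φ y
  rw [convOp_apply, integral_conv ((translateLeft φ y).integrable _)]
  simp only [mul_apply_eq_comp, convOp_apply, translateLeft_apply, add_assoc]

lemma commute_convOp : Commute (convOp μ) (convOp ν) := by
  rw [Commute, SemiconjBy, ← convOp_eq_mul rfl, convOp_eq_mul (Measure.conv_comm μ ν)]

lemma norm_convOp_sub_le {K : ℝ} (hK : 0 ≤ K)
    (h : ∀ φ : M →ᵇ ℝ, |∫ x, φ x ∂μ - ∫ x, φ x ∂ν| ≤ K * ‖φ‖) : ‖convOp μ - convOp ν‖ ≤ K := by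
  refine ContinuousLinearMap.opNorm_le_bound _ hK fun φ ↦
    (BoundedContinuousFunction.norm_le (by positivity)).mpr fun y ↦ ?_
  exact (h (translateLeft φ y)).trans (by gcongr; exact norm_translateLeft_le φ y)

lemma abs_integral_sub_integral_le_norm_convOp_sub (φ : M →ᵇ ℝ) :
    |∫ x, φ x ∂μ - ∫ x, φ x ∂ν| ≤ ‖convOp μ - convOp ν‖ * ‖φ‖ := by
  rw [← convOp_apply_zero, ← convOp_apply_zero]
  exact ((convOp μ - convOp ν) φ).norm_coe_le_norm 0 |>.trans
    ((convOp μ - convOp ν).le_opNorm φ)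

end ConvolutionOperators

section HeatOperators

variable {s t : ℝ}

/-- The heat semigroup on bounded continuous functions. -/
noncomputable def heatOp (s : ℝ) :
    BoundedContinuousFunction ℝ ℝ →L[ℝ] BoundedContinuousFunction ℝ ℝ :=
  convOp (centeredGaussian s)

lemma isHeatLike_heatOp : IsHeatLike heatOp where
  mul_eq _ _ hs ht := (convOp_eq_mul (centeredGaussian_conv hs.le ht.le).symm).symm
  norm_le_one _ _ := norm_convOp_le_one
  norm_mul_one_sub_le s t hs ht hts := by
    rw [mul_one_sub (heatOp s) (heatOp t), heatOp, heatOp,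
      ← convOp_eq_mul (centeredGaussian_conv hs.le ht.le).symm]
    refine norm_convOp_sub_le (by positivity) fun φ ↦
      (abs_integral_sub_integral_centeredGaussian_le hs ht (by linarith) φ).trans ?_
    have h_le : t / (s + t) ≤ t / s := by gcongr; linarith
    have h_nonneg : 0 ≤ t / s := by positivity
    gcongr
    linarith

lemma convOp_mul_heatOp (ρ : Measure ℝ) [IsProbabilityMeasure ρ] (s : ℝ) :
    convOp ρ * heatOp s = convOp (ρ ∗ centeredGaussian s) :=
  (convOp_eq_mul rfl).symm

lemma convOp_mul_heatOp_mul_one_sub (ρ : Measure ℝ) [IsProbabilityMeasure ρ] (hs : 0 < s)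
    (ht : 0 < t) : convOp ρ * (heatOp s * (1 - heatOp t)) =
      convOp (ρ ∗ centeredGaussian s) - convOp (ρ ∗ centeredGaussian (s + t)) := by
  rw [mul_one_sub (heatOp s) (heatOp t), isHeatLike_heatOp.mul_eq hs ht,
    mul_sub (convOp ρ) (heatOp s) (heatOp (s + t)), convOp_mul_heatOp, convOp_mul_heatOp]

lemma norm_convOp_mul_heatOp_mul_one_sub_le {ρ : Measure ℝ} [IsProbabilityMeasure ρ] {B : ℝ}
    (hB : ∀ᵐ x ∂ρ, |x| ≤ B) (hs : 0 < s) (ht : 0 < t) (hts : 4 * t ≤ s)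
    (h_drop : negEntropy ρ (s / 4) - negEntropy ρ (5 * s / 4) ≤ 1 / 144) :
    ‖convOp ρ * (heatOp s * (1 - heatOp t))‖ ≤ t / (6 * s) := by
  have h_mono : negEntropy ρ (5 * s / 4) ≤ negEntropy ρ (s / 4 + (3 * s / 4 + t)) :=
    negEntropy_antitone (by positivity) (by linarith) hB
  rw [convOp_mul_heatOp_mul_one_sub ρ hs ht]
  refine norm_convOp_sub_le (by positivity) fun φ ↦ ?_
  have h_diff := abs_integral_conv_sub_integral_conv_le (δ := 1 / 12) (s := s / 4)
    (r := 3 * s / 4) hB (by positivity) ht (by linarith) (by norm_num) (by linarith) φ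
  rw [conv_centeredGaussian_conv (by positivity) (by positivity),
    conv_centeredGaussian_conv (by positivity) (by positivity), ← add_assoc,
    show s / 4 + 3 * s / 4 = s by ring] at h_diff
  refine h_diff.trans ?_
  have h_le : t / (3 * s / 4 + t) ≤ t / (3 * s / 4) := by gcongr; linarith
  calc 2 * (3 / 4 * (t / (3 * s / 4 + t))) * (1 / 12) * ‖φ‖
      ≤ 2 * (3 / 4 * (t / (3 * s / 4))) * (1 / 12) * ‖φ‖ := by gcongr
    _ = t / (6 * s) * ‖φ‖ := by
      field_simp
      ring

end HeatOperators

section SelfSimilar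

open scoped BoundedContinuousFunction

instance {μ : Measure ℝ} [IsProbabilityMeasure μ] (r : ℝ) : IsProbabilityMeasure (μ.map (r * ·)) :=
  Measure.isProbabilityMeasure_map (by fun_prop)

variable {μ : Measure ℝ} {x β : ℝ}

lemma ae_abs_map_mul_left_le {B : ℝ} (hB : ∀ᵐ y ∂μ, |y| ≤ B) (r : ℝ) :
    ∀ᵐ y ∂μ.map (r * ·), |y| ≤ |r| * B := by
  rw [ae_map_iff (by fun_prop) (measurableSet_le (by fun_prop) (by fun_prop))]
  filter_upwards [hB] with y hy
  rw [abs_mul]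
  gcongr

variable [IsProbabilityMeasure μ]

lemma eq_signSum_conv_map (hμ : μ = fairCoin 1 ∗ μ.map (x * ·)) (L : ℕ) :
    μ = signSum (x ^ ·) L ∗ μ.map (x ^ L * ·) := by
  induction L with
  | zero => simp [signSum]
  | succ L ih =>
    have h_comp : (x ^ L * ·) ∘ (x * ·) = (x ^ (L + 1) * · : ℝ → ℝ) := by
      ext y
      simp only [Function.comp_apply, pow_succ, mul_assoc]
    have h_step : μ.map (x ^ L * ·) = fairCoin (x ^ L) ∗ μ.map (x ^ (L + 1) * ·) := by
      conv_lhs => rw [hμ]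
      rw [map_conv_mul_left, map_fairCoin, mul_one, Measure.map_map (by fun_prop) (by fun_prop),
        h_comp]
    rw [signSum, Measure.conv_assoc, ← h_step, ← ih]

lemma map_mul_left_eq_conv (hμ : μ = fairCoin 1 ∗ μ.map (x * ·)) (r : ℝ) (L : ℕ) :
    μ.map (r * ·) = (signSum (x ^ ·) L).map (r * ·) ∗ μ.map (r * x ^ L * ·) := by
  conv_lhs => rw [eq_signSum_conv_map hμ L]
  rw [map_conv_mul_left, Measure.map_map (by fun_prop) (by fun_prop)]
  simp only [Function.comp_def, mul_assoc]

lemma norm_mul_mul_pow_succ_le {A : Type*} [NormedRing A]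
    {P Q R X : A} (hP : ‖P‖ ≤ 1) (hRX : Commute R X) (k : ℕ) :
    ‖P * (Q * R) * X ^ (k + 1)‖ ≤ ‖Q * X‖ * ‖R * X ^ k‖ := by
  have h_eq : P * (Q * R) * X ^ (k + 1) = P * (Q * X * (R * X ^ k)) := by
    rw [pow_succ']
    simp only [mul_assoc]
    rw [← mul_assoc R X, hRX.eq, mul_assoc]
  rw [h_eq]
  exact (norm_mul_le _ _).trans ((mul_le_of_le_one_left (norm_nonneg _) hP).trans
    (norm_mul_le _ _))

lemma commute_convOp_heatOp_mul_one_sub (s t : ℝ) :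
    Commute (convOp μ) (heatOp s * (1 - heatOp t)) := by
  have h_one : Commute (convOp μ) 1 := Commute.one_right (convOp μ)
  have h_sub : Commute (convOp μ) (1 - heatOp t) :=
    Commute.sub_right (b := 1) (c := heatOp t) h_one commute_convOp
  exact Commute.mul_right (b := heatOp s) (c := 1 - heatOp t) commute_convOp h_sub

lemma norm_convOp_map_signSum_mul_le {L : ℕ} {r w t : ℝ} (hx0 : 0 ≤ x) (hx1 : x < 1) (hr : 0 < r)
    (hw : 0 < w) (ht : 0 < t) (htw : 4 * t ≤ r ^ 2 * w)
    (h_drop : negEntropy (signSum (x ^ ·) L) (w / 4) - negEntropy (signSum (x ^ ·) L) (5 * w / 4)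
      ≤ 1 / 144) :
    ‖convOp ((signSum (x ^ ·) L).map (r * ·)) * (heatOp (r ^ 2 * w) * (1 - heatOp t))‖
      ≤ t / (6 * (r ^ 2 * w)) := by
  have hB := ae_abs_signSum_pow_le hx0 hx1 L
  refine norm_convOp_mul_heatOp_mul_one_sub_le (ae_abs_map_mul_left_le hB r) (by positivity) ht
    htw ?_
  rw [mul_div_assoc, mul_left_comm, mul_div_assoc,
    negEntropy_map_mul_left hB hr (by positivity), negEntropy_map_mul_left hB hr (by positivity)]
  linarith

/-- One factor `heatOp s * (1 - heatOp t)` is absorbed by a block `signSum (x ^ ·) L` of the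
self-similar measure, placed at a good scale; the remaining factors meet a smaller copy of `μ`. -/
lemma damps_heatOp_convOp_map (hx0 : 0 < x) (hx1 : x < 1) {N : ℕ}
    (h_good : ∀ L ≥ N, HasGoodScales x β L) (hμ : μ = fairCoin 1 ∗ μ.map (x * ·)) (k : ℕ) {r : ℝ}
    (hr : 0 < r) : Damps heatOp (convOp (μ.map (r * ·))) k (r ^ 2 * (β ^ (2 ^ k * N))⁻¹) := by
  induction k generalizing r with
  | zero =>
    intro s t _ _ _ _
    simpa using norm_convOp_le_one
  | succ k ih =>
    intro s t hs ht hts hsM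
    obtain ⟨b, w, hw, hv, hwL, h_drop⟩ := h_good (2 ^ k * N)
      (Nat.le_mul_of_pos_left _ (by positivity)) (s / r ^ 2) (by positivity) (by
        rwa [div_le_iff₀' (by positivity), ← mul_assoc, ← pow_succ'])
    obtain rfl : s = (r * x ^ b) ^ 2 * w := by
      rw [mul_pow, mul_assoc, ← hv]
      field_simp
    have h_split := (convOp_eq_mul (map_mul_left_eq_conv hμ r b)).trans
      (congrArg _ (convOp_eq_mul (map_mul_left_eq_conv hμ (r * x ^ b) (2 ^ k * N))))
    have h_block := norm_convOp_map_signSum_mul_le hx0.le hx1 (by positivity) hw ht hts h_drop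
    have h_rest := ih (r := r * x ^ b * x ^ (2 ^ k * N)) (by positivity) hs ht hts (by
      rw [mul_pow _ (x ^ (2 ^ k * N)), mul_assoc]
      gcongr)
    rw [h_split, pow_succ' (t / _)]
    refine (norm_mul_mul_pow_succ_le (A := (ℝ →ᵇ ℝ) →L[ℝ] (ℝ →ᵇ ℝ)) norm_convOp_le_one
      (commute_convOp_heatOp_mul_one_sub _ _) k).trans ?_
    gcongr

end SelfSimilar

section AbsoluteContinuity

open scoped BoundedContinuousFunction Topology
open Filter

lemma measureReal_sub_le_of_abs_integral_sub_le {X : Type*} [PseudoEMetricSpace X]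
    [MeasurableSpace X] [OpensMeasurableSpace X] {μ ν : Measure X} [IsFiniteMeasure μ]
    [IsFiniteMeasure ν] {ε : ℝ} (hε : 0 ≤ ε)
    (h : ∀ φ : X →ᵇ ℝ, |∫ x, φ x ∂μ - ∫ x, φ x ∂ν| ≤ ε * ‖φ‖) {F : Set X} (hF : IsClosed F) :
    μ.real F - ν.real F ≤ ε := by
  have h_pos (n : ℕ) : (0 : ℝ) < 1 / (n + 1) := Nat.one_div_pos_of_nat
  have h_lim := tendsto_one_div_add_atTop_nhds_zero_nat (𝕜 := ℝ)
  refine le_of_tendsto'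
    ((tendsto_integral_thickenedIndicator_of_isClosed μ hF h_pos h_lim).sub
      (tendsto_integral_thickenedIndicator_of_isClosed ν hF h_pos h_lim)) fun n ↦ ?_
  let φ : X →ᵇ ℝ := .ofNormedAddCommGroup (fun x ↦ (thickenedIndicator (h_pos n) F x : ℝ))
    (by fun_prop) 1 fun x ↦ by simpa using thickenedIndicator_le_one (h_pos n) F x
  have hφ : ‖φ‖ ≤ 1 := BoundedContinuousFunction.norm_ofNormedAddCommGroup_le _ zero_le_one _
  exact (le_abs_self _).trans ((h φ).trans (mul_le_of_le_one_right hε hφ))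

lemma absolutelyContinuous_of_forall_exists_abs_integral_sub_le {X : Type*} [PseudoEMetricSpace X]
    [MeasurableSpace X] [BorelSpace X] {μ κ : Measure X} [IsFiniteMeasure μ]
    (h : ∀ ε > 0, ∃ ν : Measure X, IsFiniteMeasure ν ∧ ν ≪ κ ∧
      ∀ φ : X →ᵇ ℝ, |∫ x, φ x ∂μ - ∫ x, φ x ∂ν| ≤ ε * ‖φ‖) : μ ≪ κ := by
  refine Measure.AbsolutelyContinuous.mk fun A hA hA0 ↦ ?_
  rw [hA.measure_eq_iSup_isClosed_of_ne_top (measure_ne_top μ A)]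
  simp only [ENNReal.iSup_eq_zero]
  intro F hFA hF
  refine (measureReal_eq_zero_iff).mp (measureReal_nonneg.antisymm' (le_of_forall_pos_le_add
    fun ε hε ↦ ?_))
  obtain ⟨ν, _, hν, h_int⟩ := h ε hε
  have h_null : ν.real F = 0 := by simp [Measure.real, hν (measure_mono_null hFA hA0)]
  linarith [measureReal_sub_le_of_abs_integral_sub_le hε.le h_int hF]

lemma continuous_integral_conv_map_mul_left (μ ν : Measure ℝ) [IsFiniteMeasure μ]
    [IsFiniteMeasure ν] (φ : ℝ →ᵇ ℝ) :
    Continuous fun r ↦ ∫ y, φ y ∂(μ ∗ ν.map (r * ·)) := by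
  have h_eq (r : ℝ) : ∫ y, φ y ∂(μ ∗ ν.map (r * ·)) = ∫ p, φ (p.1 + r * p.2) ∂(μ.prod ν) := by
    have h_map : μ.prod (ν.map (r * ·)) = (μ.prod ν).map (Prod.map id (r * ·)) := by
      rw [← Measure.map_prod_map _ _ measurable_id (by fun_prop), Measure.map_id]
    rw [Measure.conv, h_map, Measure.map_map (by fun_prop) (by fun_prop),
      integral_map (by fun_prop) φ.continuous.aestronglyMeasurable]
    rfl
  simp only [h_eq]
  exact continuous_of_dominated
    (fun r ↦ (φ.continuous.comp (by fun_prop)).aestronglyMeasurable)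
    (fun _ ↦ ae_of_all _ fun _ ↦ φ.norm_coe_le_norm _) (integrable_const _)
    (ae_of_all _ fun _ ↦ φ.continuous.comp (by fun_prop))

lemma tendsto_integral_conv_centeredGaussian (μ : Measure ℝ) [IsFiniteMeasure μ] (φ : ℝ →ᵇ ℝ) :
    Tendsto (fun s ↦ ∫ y, φ y ∂(μ ∗ centeredGaussian s)) (𝓝[>] 0) (𝓝 (∫ y, φ y ∂μ)) := by
  have h_cont := (continuous_integral_conv_map_mul_left μ (centeredGaussian 1) φ).comp
    continuous_sqrt
  have h_zero : centeredGaussian 0 = Measure.dirac 0 := by simp [centeredGaussian]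
  refine ((h_cont.tendsto' 0 _ ?_).mono_left nhdsWithin_le_nhds).congr' ?_
  · simp [map_centeredGaussian _ zero_le_one, h_zero]
  · filter_upwards [self_mem_nhdsWithin] with s hs
    rw [Function.comp_apply, map_centeredGaussian _ zero_le_one, sq_sqrt (le_of_lt hs), mul_one]

lemma absolutelyContinuous_of_cauchySeq {μ : Measure ℝ} [IsProbabilityMeasure μ] {u : ℕ → ℝ}
    (hu0 : ∀ i, 0 < u i) (hu : Tendsto u atTop (𝓝 0))
    (h : CauchySeq fun i ↦ convOp μ * heatOp (u i)) : μ ≪ volume := by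
  refine absolutelyContinuous_of_forall_exists_abs_integral_sub_le fun ε hε ↦ ?_
  obtain ⟨N, hN⟩ := (Metric.cauchySeq_iff' (u := fun i ↦ convOp μ * heatOp (u i))).mp h ε hε
  refine ⟨μ ∗ centeredGaussian (u N), inferInstance, ?_, fun φ ↦ ?_⟩
  · rw [conv_centeredGaussian_eq_withDensity (hu0 N)]
    exact withDensity_absolutelyContinuous _ _
  have hu' : Tendsto u atTop (𝓝[>] 0) := tendsto_nhdsWithin_iff.mpr ⟨hu, .of_forall hu0⟩
  refine le_of_tendsto
    (((tendsto_integral_conv_centeredGaussian μ φ).comp hu').sub_const _).abs ?_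
  filter_upwards [eventually_ge_atTop N] with i hi
  have h_dist := (hN i hi).le
  rw [dist_eq_norm (convOp μ * heatOp (u i)), convOp_mul_heatOp, convOp_mul_heatOp] at h_dist
  exact (abs_integral_sub_integral_le_norm_convOp_sub φ).trans (by gcongr)

theorem absolutelyContinuous_of_eventually_hasGoodScales {μ : Measure ℝ} [IsProbabilityMeasure μ]
    {x β : ℝ} (hx0 : 0 < x) (hx1 : x < 1) (hβ : 2 ≤ β) (hβ' : β ≤ 4)
    (h_good : ∀ᶠ L in atTop, HasGoodScales x β L) (hμ : μ = fairCoin 1 ∗ μ.map (x * ·)) :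
    μ ≪ volume := by
  obtain ⟨N, hN, hN1⟩ :=
    ((eventually_forall_ge_atTop.mpr h_good).and (eventually_ge_atTop 1)).exists
  have h_damps (k : ℕ) : Damps heatOp (convOp μ) k (β ^ (2 ^ k * N))⁻¹ := by
    simpa using damps_heatOp_convOp_map hx0 hx1 hN hμ k one_pos
  refine absolutelyContinuous_of_cauchySeq (fun i ↦ by positivity) ?_
    (isHeatLike_heatOp.cauchySeq norm_convOp_le_one hβ hβ' hN1 h_damps)
  exact (tendsto_pow_atTop_nhds_zero_of_lt_one (by norm_num) (by norm_num)).comp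
    (tendsto_atTop_mono (fun i ↦ (Nat.lt_two_pow_self.le).trans (Nat.le_mul_of_pos_right _ hN1))
      tendsto_id)

end AbsoluteContinuity

section BinaryDigits

/-! ### The binary digit model -/

/-- The `n`-th binary digit of the fractional part of `y`, as a sign: `1` for the digit `1` and
`-1` for the digit `0`. -/
noncomputable def binarySign (n : ℕ) (y : ℝ) : ℝ := if ⌊y * 2 ^ (n + 1)⌋ % 2 = 1 then 1 else -1

/-- The random series whose law is `bernoulliConv x`. -/
noncomputable def binarySeries (x y : ℝ) : ℝ := ∑' n : ℕ, binarySign n y * x ^ n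

variable {x y : ℝ}

lemma abs_binarySign (n : ℕ) (y : ℝ) : |binarySign n y| = 1 := by
  unfold binarySign
  split_ifs <;> simp

lemma measurable_binarySign (n : ℕ) : Measurable (binarySign n) := by
  have h_floor : Measurable fun y : ℝ ↦ ⌊y * 2 ^ (n + 1)⌋ := by fun_prop
  exact .ite (h_floor (.of_discrete (s := {z | z % 2 = 1}))) measurable_const measurable_const

lemma summable_binarySign_mul_pow (hx0 : 0 ≤ x) (hx1 : x < 1) (y : ℝ) :
    Summable fun n ↦ binarySign n y * x ^ n := by
  refine .of_norm_bounded (summable_geometric_of_lt_one hx0 hx1) fun n ↦ ?_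
  rw [norm_mul, norm_eq_abs, abs_binarySign, one_mul, norm_of_nonneg (by positivity)]

lemma measurable_binarySeries (hx0 : 0 ≤ x) (hx1 : x < 1) : Measurable (binarySeries x) :=
  measurable_of_tendsto_metrizable
    (f := fun N y ↦ ∑ n ∈ Finset.range N, binarySign n y * x ^ n)
    (fun _ ↦ Finset.measurable_fun_sum _ fun n _ ↦ (measurable_binarySign n).mul_const _)
    (tendsto_pi_nhds.mpr fun y ↦
      (summable_binarySign_mul_pow hx0 hx1 y).hasSum.tendsto_sum_nat)

lemma binarySign_succ_half_add_half (n : ℕ) (k : ℤ) (y : ℝ) :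
    binarySign (n + 1) (2⁻¹ * y + k / 2) = binarySign n y := by
  have h_eq : (2⁻¹ * y + k / 2) * 2 ^ (n + 1 + 1)
      = y * 2 ^ (n + 1) + ((2 * (k * 2 ^ n) : ℤ) : ℝ) := by
    push_cast
    ring
  simp only [binarySign, h_eq, Int.floor_add_intCast, Int.add_mul_emod_self_left]

lemma binarySign_zero_half (hy : y ∈ Set.Ico (0 : ℝ) 1) : binarySign 0 (2⁻¹ * y) = -1 := by
  have h_floor : ⌊2⁻¹ * y * 2 ^ (0 + 1)⌋ = 0 := by
    rw [Int.floor_eq_zero_iff]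
    convert hy using 1
    ring
  rw [binarySign, h_floor]
  norm_num

lemma binarySign_zero_half_add_half (hy : y ∈ Set.Ico (0 : ℝ) 1) :
    binarySign 0 (2⁻¹ * y + 1 / 2) = 1 := by
  have h_floor : ⌊(2⁻¹ * y + 1 / 2) * 2 ^ (0 + 1)⌋ = 1 := by
    rw [Int.floor_eq_iff]
    push_cast
    constructor <;> linarith [hy.1, hy.2]
  rw [binarySign, h_floor]
  norm_num

lemma binarySeries_half_add_half (hx0 : 0 ≤ x) (hx1 : x < 1) (k : ℤ) (y : ℝ) :
    binarySeries x (2⁻¹ * y + k / 2) = binarySign 0 (2⁻¹ * y + k / 2) + x * binarySeries x y := by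
  rw [binarySeries, (summable_binarySign_mul_pow hx0 hx1 _).tsum_eq_zero_add, pow_zero, mul_one,
    binarySeries, ← tsum_mul_left]
  simp only [binarySign_succ_half_add_half, pow_succ', mul_left_comm]

/-- The uniform distribution on `[0, 1)`. -/
noncomputable def unitUniform : Measure ℝ := volume.restrict (Set.Ico 0 1)

instance : IsProbabilityMeasure unitUniform := ⟨by simp [unitUniform]⟩

lemma ae_unitUniform_mem_Ico : ∀ᵐ y ∂unitUniform, y ∈ Set.Ico (0 : ℝ) 1 :=
  ae_restrict_mem measurableSet_Ico

lemma map_half_mul_add_unitUniform (c : ℝ) :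
    (2⁻¹ : ENNReal) • unitUniform.map (2⁻¹ * · + c) = volume.restrict (Set.Ico c (c + 1 / 2)) := by
  have h_volume : (volume : Measure ℝ).map (2⁻¹ * · + c) = (2 : ENNReal) • volume := by
    rw [← Function.comp_def (· + c) (2⁻¹ * ·), ← Measure.map_map (by fun_prop) (by fun_prop),
      Real.map_volume_mul_left (by norm_num), Measure.map_smul, map_add_right_eq_self]
    norm_num
  have h_preimage : (2⁻¹ * · + c) ⁻¹' Set.Ico c (c + 1 / 2) = Set.Ico 0 1 := by
    ext y
    simp only [Set.mem_preimage, Set.mem_Ico]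
    constructor <;> rintro ⟨h_left, h_right⟩ <;> constructor <;> linarith
  rw [unitUniform, ← h_preimage, ← Measure.restrict_map (by fun_prop) measurableSet_Ico, h_volume,
    Measure.restrict_smul, smul_smul, ENNReal.inv_mul_cancel (by norm_num) (by norm_num), one_smul]

lemma unitUniform_eq_add : unitUniform =
    (2⁻¹ : ENNReal) • unitUniform.map (2⁻¹ * ·) +
      (2⁻¹ : ENNReal) • unitUniform.map (2⁻¹ * · + 1 / 2) := by
  have h_left := map_half_mul_add_unitUniform 0
  simp only [add_zero, zero_add] at h_left
  rw [h_left, map_half_mul_add_unitUniform, add_halves, unitUniform,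
    ← Set.Ico_union_Ico_eq_Ico (b := 1 / 2) (by norm_num) (by norm_num),
    Measure.restrict_union (Set.Ico_disjoint_Ico_same) measurableSet_Ico]

end BinaryDigits

section BernoulliConvolution

variable {x β : ℝ}

lemma bernoulliConv_eq_map (x : ℝ) : bernoulliConv x = unitUniform.map (binarySeries x) := rfl

lemma isProbabilityMeasure_bernoulliConv (hx0 : 0 ≤ x) (hx1 : x < 1) :
    IsProbabilityMeasure (bernoulliConv x) := by
  rw [bernoulliConv_eq_map]
  exact Measure.isProbabilityMeasure_map (measurable_binarySeries hx0 hx1).aemeasurable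

/-- Halving the interval at `1 / 2` exposes the first binary digit. -/
lemma bernoulliConv_eq_conv (hx0 : 0 ≤ x) (hx1 : x < 1) :
    bernoulliConv x = fairCoin 1 ∗ (bernoulliConv x).map (x * ·) := by
  have h_meas := measurable_binarySeries hx0 hx1
  have := isProbabilityMeasure_bernoulliConv hx0 hx1
  have h_left : unitUniform.map (fun y ↦ binarySeries x (2⁻¹ * y)) =
      unitUniform.map (fun y ↦ -1 + x * binarySeries x y) :=
    Measure.map_congr <| ae_unitUniform_mem_Ico.mono fun y hy ↦ by
      simpa [binarySign_zero_half hy] using binarySeries_half_add_half hx0 hx1 0 y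
  have h_right : unitUniform.map (fun y ↦ binarySeries x (2⁻¹ * y + 1 / 2)) =
      unitUniform.map (fun y ↦ 1 + x * binarySeries x y) :=
    Measure.map_congr <| ae_unitUniform_mem_Ico.mono fun y hy ↦ by
      simpa only [Int.cast_one, binarySign_zero_half_add_half hy] using
        binarySeries_half_add_half hx0 hx1 1 y
  conv_lhs => rw [bernoulliConv_eq_map, unitUniform_eq_add]
  rw [Measure.map_add _ _ h_meas, Measure.map_smul, Measure.map_smul,
    Measure.map_map h_meas (by fun_prop), Measure.map_map h_meas (by fun_prop),
    Function.comp_def, Function.comp_def, h_left, h_right, add_comm, fairCoin, Measure.add_conv,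
    Measure.conv_smul_left, Measure.conv_smul_left, Measure.dirac_conv, Measure.dirac_conv,
    bernoulliConv_eq_map]
  rw [Measure.map_map (by fun_prop) h_meas, Measure.map_map (by fun_prop) (by fun_prop),
    Measure.map_map (by fun_prop) (by fun_prop)]
  rfl

theorem IsSeparated.bernoulliConv_absolutelyContinuous {c : ℝ} (h : IsSeparated x β c)
    (hc : 0 < c) (hβ : 2 ≤ β) (hβ' : β ≤ 2.001) (hx0 : 0 < x) (hx1 : x < 1)
    (hx : 1 / 2 ≤ x ^ 4) : bernoulliConv x ≪ volume := by
  have := isProbabilityMeasure_bernoulliConv hx0.le hx1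
  exact absolutelyContinuous_of_eventually_hasGoodScales hx0 hx1 hβ (by linarith)
    (h.eventually_hasGoodScales hc hβ hβ' hx0 hx1 hx) (bernoulliConv_eq_conv hx0.le hx1)

end BernoulliConvolution

theorem statement17 (n : ℕ) (hn : 13 ≤ n) :
    (∃ lam ∈ Set.Ioo (1 / 2 : ℝ) 1, lam ^ n - 2 * lam ^ (n - 1) - lam + 1 = 0) ∧
    ∀ lam ∈ Set.Ioo (1 / 2 : ℝ) 1, lam ^ n - 2 * lam ^ (n - 1) - lam + 1 = 0 →
      bernoulliConv lam ≪ volume := by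
  obtain ⟨m, rfl⟩ := Nat.exists_eq_succ_of_ne_zero (show n ≠ 0 by lia)
  have hm : 12 ≤ m := by lia
  rw [Nat.succ_sub_one]
  refine ⟨exists_root_Ioo hm, fun lam h_lam h_root ↦ ?_⟩
  have h_pos : 0 < lam := by linarith [h_lam.1]
  have h_eq : lam ^ m * (lam - 2) = lam - 1 := by
    rw [pow_succ] at h_root
    linarith
  obtain ⟨β, hβ, hβ', hβ_root⟩ := exists_expanding_root hm
  obtain ⟨c, hc, h_sep⟩ := exists_isSeparated_of_root hm hβ hβ_root h_pos h_lam.2 h_eq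
  exact h_sep.bernoulliConv_absolutelyContinuous hc hβ.le hβ' h_pos h_lam.2
    (half_le_pow_four_of_root hm h_lam h_eq)
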